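/- For each pair of positive integers $n$ and $N$ there exist a finite set $L$, index sets $K_l \subseteq \{1, \ldots, n\}$ for $l \in L$, and index sets $J_{il} \subseteq \{1, \ldots, n\}$ for $l \in L$ and $i \in \{1, \ldots, N\}$, such that the following holds: an $n \times n$ Hermitian matrix $A$ can be written as the sum of $N$ Hermitian $n \times n$ matrices with respective (nonincreasing) spectra $\lambda^1, \ldots, \lambda^N$ if and only if $\mathrm{Tr}(A) = \sum_{i=1}^N \sum_{j=1}^n \lambda^i_j$ and, for every $l \in L$, $\sum_{k \in K_l} (\mathrm{Spec}(A))_k \leq \sum_{i=1}^N \sum_{j \in J_{il}} \lambda^i_j$. -/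

import Mathlib

open Matrix Polynomial

/-- `lam` is the vector of eigenvalues of `M` listed with multiplicity:
the characteristic polynomial of `M` is `∏ i (X - lam i)`. -/
def HasSpectrum {m : Type*} [Fintype m] [DecidableEq m] {N : ℕ}
    (M : Matrix m m ℂ) (lam : Fin N → ℝ) : Prop :=
  M.charpoly = ∏ i, (X - C (lam i : ℂ))

/-!
A vanishing sum `∑ i, U i diag(ν i) (U i)ᴴ = 0` forces `∑ i, ∑ l, ν i (a i l) ≤ 0` whenever the
eigenflags have a common subspace in Schubert positions `a`: compress the sum to that subspace and
take traces. The inequalities of the theorem are those for the positions in which all flags, and not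
just some, have a common subspace.

Conversely, choose flags whose coordinates have a dense orbit under `Aut ℂ`. They meet only in
positions in which all flags meet, so the inequalities say exactly that these flags with weights `ν`
are slope semistable. Semistability bounds their Kempf–Ness function from below on the cone of
positive definite forms. A small multiple of `tr X - log det X` makes it attain its minimum, and the
critical point equation provides unitary frames for which `∑ i, U i diag(ν i) (U i)ᴴ` is almost
zero. Since the unitary group is compact, some frames make it vanish.
-/

/-- The sums `∑ j ≥ k, c j`. As `c` runs over the nonnegative families on `Fin n`, these run over
the nonincreasing nonnegative families, which turns weights into multiplicities of leading
principal minors. -/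
def tailSum {m R : Type*} [Preorder m] [LocallyFiniteOrderTop m] [AddCommMonoid R]
    (c : m → R) (k : m) : R :=
  ∑ j ∈ Finset.Ici k, c j

theorem sum_mul_tailSum {m R : Type*} [Fintype m] [Preorder m] [LocallyFiniteOrderTop m]
    [LocallyFiniteOrderBot m] [CommSemiring R] (c z : m → R) :
    ∑ k, z k * tailSum c k = ∑ j, c j * ∑ k ∈ Finset.Iic j, z k := by
  simp_rw [tailSum, Finset.mul_sum, mul_comm (z _)]
  exact Finset.sum_comm' (by simp)

theorem tailSum_cons_zero {R : Type*} [AddCommMonoid R] {n : ℕ} (x : R) (c : Fin n → R) :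
    tailSum (Fin.cons x c : Fin (n + 1) → R) 0 = x + ∑ j, c j := by
  have h : Finset.Ici (0 : Fin (n + 1)) = Finset.univ := by ext; simp
  rw [tailSum, h, Fin.sum_cons]

theorem tailSum_cons_succ {R : Type*} [AddCommMonoid R] {n : ℕ} (x : R) (c : Fin n → R)
    (k : Fin n) : tailSum (Fin.cons x c : Fin (n + 1) → R) k.succ = tailSum c k := by
  rw [tailSum, tailSum, ← Fin.map_succEmb_Ici, Finset.sum_map]
  simp only [Fin.coe_succEmb, Fin.cons_succ]

theorem exists_nonneg_tailSum_eq {n : ℕ} {ν : Fin n → ℝ} (hν : Antitone ν) (hν0 : 0 ≤ ν) :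
    ∃ c, 0 ≤ c ∧ tailSum c = ν := by
  induction n with
  | zero => exact ⟨0, le_rfl, Subsingleton.elim _ _⟩
  | succ n ih =>
    obtain ⟨c, hc, hcν⟩ := ih (hν.comp_monotone (Fin.strictMono_succ).monotone) fun k => hν0 k.succ
    have hsum : ∑ j, c j ≤ ν 0 := by
      cases n with
      | zero => simpa using hν0 0
      | succ n =>
        have h : Finset.Ici (0 : Fin (n + 1)) = Finset.univ := by ext; simp
        calc ∑ j, c j = tailSum c 0 := by rw [tailSum, h]
          _ = ν 1 := congrFun hcν 0
          _ ≤ ν 0 := hν (Fin.zero_le 1)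
    refine ⟨Fin.cons (ν 0 - ∑ j, c j) c, Fin.cases (sub_nonneg.2 hsum) hc, funext ?_⟩
    refine Fin.cases ?_ fun k => ?_
    · rw [tailSum_cons_zero, sub_add_cancel]
    · rw [tailSum_cons_succ, hcν, Function.comp_apply]

theorem sum_mul_nonneg_of_monotone {n : ℕ} {y z : Fin n → ℝ} (hy : Monotone y)
    (hz : ∀ j, ∑ k ∈ Finset.Iic j, z k ≤ 0) (hz0 : ∑ k, z k = 0) : 0 ≤ ∑ k, z k * y k := by
  obtain ⟨t, ht⟩ := (Set.finite_range y).bddAbove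
  obtain ⟨c, hc, hcy⟩ := exists_nonneg_tailSum_eq (ν := fun k => t - y k)
    (fun _ _ h => sub_le_sub_left (hy h) t) fun k => sub_nonneg.2 (ht ⟨k, rfl⟩)
  calc
    0 ≤ -∑ j, c j * ∑ k ∈ Finset.Iic j, z k :=
      neg_nonneg.2 <| Finset.sum_nonpos fun j _ => mul_nonpos_of_nonneg_of_nonpos (hc j) (hz j)
    _ = -∑ k, z k * (t - y k) := by rw [← sum_mul_tailSum, hcy]
    _ = ∑ k, z k * y k := by
      simp only [mul_sub, Finset.sum_sub_distrib, ← Finset.sum_mul, hz0, zero_mul, zero_sub,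
        neg_neg]

section UnitaryConjugation

variable {m : Type*} [Fintype m] [DecidableEq m]

/-- The Hermitian matrix `U diag(d) Uᴴ` with eigenvalues `d` and orthonormal eigenvectors the
columns of `U`. -/
noncomputable def conjDiag (U : unitaryGroup m ℂ) (d : m → ℝ) : Matrix m m ℂ :=
  Unitary.conjStarAlgAut ℂ _ U (diagonal fun i => (d i : ℂ))

theorem conjDiag_eq_mul (U : unitaryGroup m ℂ) (d : m → ℝ) :
    conjDiag U d = (U : Matrix m m ℂ) * diagonal (fun i => (d i : ℂ)) * (U : Matrix m m ℂ)ᴴ :=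
  Unitary.conjStarAlgAut_apply _ _

theorem conjDiag_isHermitian (U : unitaryGroup m ℂ) (d : m → ℝ) : (conjDiag U d).IsHermitian := by
  rw [conjDiag_eq_mul]
  exact isHermitian_mul_mul_conjTranspose _
    (isHermitian_diagonal_of_self_adjoint _ (funext fun i => Complex.conj_ofReal _))

theorem charpoly_conjDiag (U : unitaryGroup m ℂ) (d : m → ℝ) :
    (conjDiag U d).charpoly = ∏ i, (X - C (d i : ℂ)) := by
  rw [conjDiag, Unitary.conjStarAlgAut_apply, charpoly_mul_comm, ← mul_assoc,
    Unitary.coe_star_mul_self, one_mul, charpoly_diagonal]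

theorem trace_conjDiag (U : unitaryGroup m ℂ) (d : m → ℝ) :
    (conjDiag U d).trace = ((∑ i, d i : ℝ) : ℂ) := by
  rw [conjDiag, Unitary.conjStarAlgAut_apply, trace_mul_comm, ← mul_assoc,
    Unitary.coe_star_mul_self, one_mul, trace_diagonal, Complex.ofReal_sum]

theorem det_conjDiag (U : unitaryGroup m ℂ) (d : m → ℝ) :
    (conjDiag U d).det = ((∏ i, d i : ℝ) : ℂ) := by
  rw [conjDiag, Unitary.conjStarAlgAut_apply, det_mul_comm, ← mul_assoc,
    Unitary.coe_star_mul_self, one_mul, det_diagonal, Complex.ofReal_prod]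

theorem conjStarAlgAut_conjDiag (W U : unitaryGroup m ℂ) (d : m → ℝ) :
    Unitary.conjStarAlgAut ℂ _ W (conjDiag U d) = conjDiag (W * U) d := by
  rw [conjDiag, conjDiag, Unitary.conjStarAlgAut_mul_apply]

theorem conjDiag_neg (U : unitaryGroup m ℂ) (d : m → ℝ) : conjDiag U (-d) = -conjDiag U d := by
  simp only [conjDiag, ← map_neg, diagonal_neg, Pi.neg_apply, Complex.ofReal_neg]

theorem conjDiag_add_const (U : unitaryGroup m ℂ) (d : m → ℝ) (t : ℝ) :
    conjDiag U (fun i => d i + t) = conjDiag U d + (t : ℂ) • 1 := by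
  simp only [conjDiag, Complex.ofReal_add, ← diagonal_add, map_add]
  rw [← smul_one_eq_diagonal, map_smul, map_one]

theorem conjDiag_comp_perm (U : unitaryGroup m ℂ) (d : m → ℝ) (σ : Equiv.Perm m) :
    ∃ V : unitaryGroup m ℂ, conjDiag V (d ∘ σ) = conjDiag U d := by
  refine ⟨⟨(U : Matrix m m ℂ).submatrix id σ, ?_⟩, ?_⟩
  · rw [mem_unitaryGroup_iff, star_eq_conjTranspose, conjTranspose_submatrix,
      submatrix_mul_equiv, submatrix_id_id]
    exact mem_unitaryGroup_iff.1 U.2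
  · have h : (diagonal fun i => (((d ∘ σ) i : ℝ) : ℂ)) =
        (diagonal fun i => (d i : ℂ)).submatrix σ σ := by
      rw [submatrix_diagonal_equiv]; rfl
    simp only [conjDiag_eq_mul, h, conjTranspose_submatrix, submatrix_mul_equiv, submatrix_id_id]

theorem eq_conjDiag_eigenvalues {A : Matrix m m ℂ} (hA : A.IsHermitian) :
    A = conjDiag hA.eigenvectorUnitary hA.eigenvalues :=
  hA.spectral_theorem

theorem exists_monotone_conjDiag {n : ℕ} {A : Matrix (Fin n) (Fin n) ℂ} (hA : A.IsHermitian) :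
    ∃ (U : unitaryGroup (Fin n) ℂ) (d : Fin n → ℝ), Monotone d ∧ conjDiag U d = A := by
  obtain ⟨V, hV⟩ :=
    conjDiag_comp_perm hA.eigenvectorUnitary hA.eigenvalues (Tuple.sort hA.eigenvalues)
  exact ⟨V, _, Tuple.monotone_sort _, hV.trans (eq_conjDiag_eigenvalues hA).symm⟩

theorem isHermitian_and_hasSpectrum_iff {n : ℕ} {A : Matrix (Fin n) (Fin n) ℂ} {d : Fin n → ℝ} :
    A.IsHermitian ∧ HasSpectrum A d ↔ ∃ U, conjDiag U d = A := by
  refine ⟨fun ⟨hA, hd⟩ => ?_, ?_⟩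
  · have hD := conjDiag_isHermitian 1 d
    have heig : hD.eigenvalues = hA.eigenvalues :=
      (hD.eigenvalues_eq_eigenvalues_iff hA).2 ((charpoly_conjDiag 1 d).trans hd.symm)
    obtain ⟨W, hW⟩ : ∃ W, conjDiag W hA.eigenvalues = conjDiag 1 d :=
      ⟨hD.eigenvectorUnitary, heig ▸ (eq_conjDiag_eigenvalues hD).symm⟩
    refine ⟨hA.eigenvectorUnitary * W⁻¹, ?_⟩
    calc
      conjDiag (hA.eigenvectorUnitary * W⁻¹) d =
          Unitary.conjStarAlgAut ℂ _ (hA.eigenvectorUnitary * W⁻¹) (conjDiag 1 d) := by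
        rw [conjStarAlgAut_conjDiag, mul_one]
      _ = conjDiag hA.eigenvectorUnitary hA.eigenvalues := by
        rw [← hW, conjStarAlgAut_conjDiag, inv_mul_cancel_right]
      _ = A := (eq_conjDiag_eigenvalues hA).symm
  · rintro ⟨U, rfl⟩
    exact ⟨conjDiag_isHermitian U d, charpoly_conjDiag U d⟩

end UnitaryConjugation

section Orthonormalization

open scoped ComplexOrder

variable {𝕜 : Type*} [RCLike 𝕜]

theorem exists_isUpperTriangular_conjTranspose_mul_mul_eq_one {β : Type*} [Fintype β]
    [LinearOrder β] {S : Matrix β β 𝕜} (hS : S.PosDef) :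
    ∃ T : Matrix β β 𝕜, T.IsUpperTriangular ∧ Tᴴ * S * T = 1 := by
  let := LocallyFiniteOrderBot.ofIic β (fun k => {l | l ≤ k}) (by simp)
  set L := LDL.lowerInv hS
  have hdiag : L * S * Lᴴ = diagonal (LDL.diagEntries hS) := (LDL.diag_eq_lowerInv_conj hS).symm
  have hpos : ∀ i, 0 < LDL.diagEntries hS i := posDef_diagonal_iff.1 <|
    hdiag ▸ hS.mul_mul_conjTranspose_same (vecMul_injective_of_isUnit (isUnit_of_invertible L))
  set E : Matrix β β 𝕜 := diagonal fun i => ((√(RCLike.re (LDL.diagEntries hS i)))⁻¹ : ℝ)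
  have hE : Eᴴ = E := by
    simp only [E, diagonal_conjTranspose]
    exact congrArg _ (funext fun i => RCLike.conj_ofReal _)
  refine ⟨Lᴴ * E, fun k l hlk => ?_, ?_⟩
  · have hL : L l k = 0 := LDL.lowerInv_triangular hS hlk
    rw [mul_diagonal, conjTranspose_apply, hL, star_zero, zero_mul]
  · calc
      (Lᴴ * E)ᴴ * S * (Lᴴ * E) = E * (L * S * Lᴴ) * E := by
        simp only [conjTranspose_mul, conjTranspose_conjTranspose, hE, mul_assoc]
      _ = 1 := by
        rw [hdiag, diagonal_mul_diagonal, diagonal_mul_diagonal, ← diagonal_one]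
        refine congrArg _ (funext fun i => ?_)
        obtain ⟨x, hx, hxi⟩ := RCLike.pos_iff_exists_ofReal.1 (hpos i)
        rw [← hxi, RCLike.ofReal_re, ← RCLike.ofReal_mul, ← RCLike.ofReal_mul, mul_right_comm,
          ← mul_inv, Real.mul_self_sqrt hx.le, inv_mul_cancel₀ hx.ne', RCLike.ofReal_one]

/-- Gram–Schmidt for the columns of `P`, taken in the order given by `b`. -/
theorem exists_blockTriangular_conjTranspose_mul_self_eq_one {m β α : Type*} [Fintype m] [Fintype β]
    [DecidableEq β] [LinearOrder α] {b : β → α} (hb : b.Injective) {P : Matrix m β 𝕜}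
    {L : Matrix β m 𝕜} (hP : L * P = 1) :
    ∃ T : Matrix β β 𝕜, T.BlockTriangular b ∧ IsUnit T ∧ (P * T)ᴴ * (P * T) = 1 := by
  have hpos : (Pᴴ * P).PosDef := .conjTranspose_mul_self _ fun x y hxy => by
    simpa only [mulVec_mulVec, hP, one_mulVec] using congrArg L.mulVec hxy
  obtain ⟨T, hT, hTP⟩ : ∃ T : Matrix β β 𝕜, T.BlockTriangular b ∧ Tᴴ * (Pᴴ * P) * T = 1 := by
    let := LinearOrder.lift' b hb
    convert exists_isUpperTriangular_conjTranspose_mul_mul_eq_one hpos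
    rfl
  refine ⟨T, hT, IsUnit.of_mul_eq_one_right _ hTP, ?_⟩
  simp only [conjTranspose_mul, ← hTP, Matrix.mul_assoc]

end Orthonormalization

section GenericTuples

/-- The automorphism `X i ↦ p X i + q i` of a polynomial ring over a field. -/
noncomputable def mvPolynomialAffineEquiv {k s : Type*} [Field k] {p : k} (hp : p ≠ 0) (q : s → k) :
    MvPolynomial s k ≃ₐ[k] MvPolynomial s k :=
  AlgEquiv.ofAlgHom
    (MvPolynomial.aeval fun i => MvPolynomial.C p * MvPolynomial.X i + MvPolynomial.C (q i))
    (MvPolynomial.aeval fun i => MvPolynomial.C p⁻¹ * (MvPolynomial.X i - MvPolynomial.C (q i)))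
    (by
      ext1 i
      simp only [AlgHom.comp_apply, MvPolynomial.aeval_X, map_mul, map_sub,
        MvPolynomial.aeval_C, AlgHom.id_apply, MvPolynomial.algebraMap_eq]
      rw [add_sub_cancel_right, ← mul_assoc, ← map_mul, inv_mul_cancel₀ hp, map_one, one_mul])
    (by
      ext1 i
      simp only [AlgHom.comp_apply, MvPolynomial.aeval_X, map_mul, map_add,
        MvPolynomial.aeval_C, AlgHom.id_apply, MvPolynomial.algebraMap_eq]
      rw [← mul_assoc, ← map_mul, mul_inv_cancel₀ hp, map_one, one_mul, sub_add_cancel])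

theorem exists_ringEquiv_affine_of_isTranscendenceBasis {k K s : Type*} [Field k] [Field K]
    [IsAlgClosed K] [Algebra k K] {x : s → K} (hx : IsTranscendenceBasis k x) {p : k} (hp : p ≠ 0)
    (q : s → k) :
    ∃ σ : K ≃+* K, ∀ i, σ (x i) = algebraMap k K p * x i + algebraMap k K (q i) := by
  let := IsAlgClosed.isAlgClosure_of_transcendence_basis x hx
  let e := hx.1.aevalEquiv.symm.trans ((mvPolynomialAffineEquiv hp q).trans hx.1.aevalEquiv)
  refine ⟨IsAlgClosure.equivOfEquiv K K e.toRingEquiv, fun i => ?_⟩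
  have hXi : algebraMap _ K (hx.1.aevalEquiv (MvPolynomial.X i)) = x i := by simp
  have hσ := IsAlgClosure.equivOfEquiv_algebraMap K K e.toRingEquiv
    (hx.1.aevalEquiv (MvPolynomial.X i))
  rw [hXi] at hσ
  simpa [e, mvPolynomialAffineEquiv] using hσ

theorem dense_algebraicClosure_rat : Dense (algebraicClosure ℚ ℂ : Set ℂ) := by
  have hI : Complex.I ∈ algebraicClosure ℚ ℂ :=
    mem_algebraicClosure_iff.2 (Complex.isIntegral_rat_I).isAlgebraic
  have htop := (Complex.subfield_eq_of_closed
    (algebraicClosure ℚ ℂ).toSubfield.isClosed_topologicalClosure).resolve_left fun h => by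
      obtain ⟨x, hx⟩ : Complex.I ∈ Complex.ofRealHom.fieldRange :=
        h ▸ Subfield.le_topologicalClosure _ hI
      simpa using congrArg Complex.im hx
  exact dense_iff_closure_eq.2 (congrArg SetLike.coe htop)

theorem exists_isTranscendenceBasis_algebraicClosure_rat_infinite :
    ∃ s : Set ℂ, IsTranscendenceBasis (algebraicClosure ℚ ℂ) ((↑) : s → ℂ) ∧ Infinite s := by
  obtain ⟨s, hs⟩ := exists_isTranscendenceBasis (algebraicClosure ℚ ℂ) ℂ
  have hcount : Countable (algebraicClosure ℚ ℂ) :=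
    ((Algebraic.countable ℚ ℂ).mono fun _ => mem_algebraicClosure_iff.1).to_subtype
  refine ⟨s, hs, ?_⟩
  rw [Cardinal.infinite_iff, ← IsAlgClosed.cardinal_eq_cardinal_transcendence_basis_of_aleph0_lt' _
    hs Cardinal.mk_le_aleph0 (Cardinal.aleph0_lt_continuum.trans_eq Cardinal.mk_complex.symm),
    Cardinal.mk_complex]
  exact Cardinal.aleph0_le_continuum

theorem exists_dense_range_automorphism (ι : Type*) [Finite ι] :
    ∃ g : ι → ℂ, Dense (Set.range fun (σ : ℂ ≃+* ℂ) i => σ (g i)) := by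
  obtain ⟨s, hs, _⟩ := exists_isTranscendenceBasis_algebraicClosure_rat_infinite
  obtain ⟨f⟩ : Nonempty (ι ↪ s) := by
    have := Fintype.ofFinite ι
    exact ⟨(Fintype.equivFin ι).toEmbedding.trans
      (Fin.valEmbedding.trans (Infinite.natEmbedding s))⟩
  refine ⟨fun i => f i, dense_iff_inter_open.2 fun U hU hUne => ?_⟩
  obtain ⟨q, hq, hqk⟩ : ∃ q ∈ U, ∀ i, q i ∈ algebraicClosure ℚ ℂ := by
    obtain ⟨q, hqU, hqk⟩ :=
      (dense_pi Set.univ fun (_ : ι) _ => dense_algebraicClosure_rat).inter_open_nonempty U hU hUne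
    exact ⟨q, hqU, fun i => hqk i trivial⟩
  have hlim : Filter.Tendsto (fun (N : ℕ) i => 1 / ((N : ℂ) + 1) * (f i : ℂ) + q i)
      Filter.atTop (nhds q) := tendsto_pi_nhds.2 fun i => by
    simpa using (tendsto_one_div_add_atTop_nhds_zero_nat.mul_const (f i : ℂ)).add_const (q i)
  obtain ⟨N, hN⟩ := (hlim.eventually (hU.mem_nhds hq)).exists
  have hN0 : (1 / ((N : algebraicClosure ℚ ℂ) + 1)) ≠ 0 :=
    one_div_ne_zero N.cast_add_one_ne_zero
  obtain ⟨σ, hσ⟩ := exists_ringEquiv_affine_of_isTranscendenceBasis hs hN0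
    (Function.extend f (fun i => ⟨q i, hqk i⟩) 0)
  refine ⟨_, hN, σ, funext fun i => ?_⟩
  beta_reduce
  rw [hσ, f.injective.extend_apply]
  simp

end GenericTuples

section Isometries

variable {m β : Type*} [Fintype m] [DecidableEq β]

theorem sum_norm_sq_col_eq_one {P : Matrix m β ℂ} (hP : Pᴴ * P = 1) (l : β) :
    ∑ k, ‖P k l‖ ^ 2 = 1 := by
  have h := congrFun (congrFun hP l) l
  simp only [mul_apply, conjTranspose_apply, one_apply_eq, RCLike.star_def,
    Complex.conj_mul'] at h
  exact_mod_cast h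

theorem isCompact_setOf_conjTranspose_mul_self_eq_one :
    IsCompact {P : Matrix m β ℂ | Pᴴ * P = 1} := by
  have hball : IsCompact {P : Matrix m β ℂ | ∀ k l, P k l ∈ Metric.closedBall 0 1} := by
    have h := isCompact_univ_pi fun _ : m => isCompact_univ_pi fun _ : β =>
      isCompact_closedBall (0 : ℂ) 1
    simpa only [Set.pi, Set.mem_univ, true_imp_iff] using! h
  refine hball.of_isClosed_subset (isClosed_eq (by fun_prop) continuous_const) fun P hP k l => ?_
  rw [mem_closedBall_zero_iff, ← sq_le_one_iff₀ (norm_nonneg _), ← sum_norm_sq_col_eq_one hP l]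
  exact Finset.single_le_sum (f := fun k => ‖P k l‖ ^ 2) (fun _ _ => sq_nonneg _)
    (Finset.mem_univ k)

end Isometries

section SchubertPositions

instance compactSpace_unitaryGroup {m : Type*} [Fintype m] [DecidableEq m] :
    CompactSpace (unitaryGroup m ℂ) := by
  refine isCompact_iff_compactSpace.1 ?_
  convert isCompact_setOf_conjTranspose_mul_self_eq_one (m := m) (β := m)
  ext U
  exact mem_unitaryGroup_iff'

variable {ι m β R : Type*} [Fintype m] [Fintype β] [DecidableEq β]

/-- The Schubert varieties with positions `a i` relative to the flags
`(G i)⁻¹ span {e k | k ≤ j}` have a common point: the column space of a matrix `P` of full rank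
has, for every `i`, a basis (the columns of `P * T i`) whose `l`-th member lies in the `a i l`-th
space of the `i`-th flag. -/
def SchubertIntersects [LT m] [CommRing R] (G : ι → Matrix m m R) (a : ι → β ↪ m) : Prop :=
  ∃ (P : Matrix m β R) (T : ι → Matrix β β R), (∃ L : Matrix β m R, L * P = 1) ∧
    (∀ i, IsUnit (T i)) ∧ ∀ i l k, a i l < k → (G i * (P * T i)) k l = 0

theorem SchubertIntersects.map {S : Type*} [LT m] [CommRing R] [CommRing S]
    {G : ι → Matrix m m R} {a : ι → β ↪ m} (h : SchubertIntersects G a) (f : R →+* S) :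
    SchubertIntersects (fun i => (G i).map f) a := by
  obtain ⟨P, T, ⟨L, hL⟩, hT, hPT⟩ := h
  refine ⟨P.map f, fun i => (T i).map f, ⟨L.map f, ?_⟩, fun i => (hT i).map f.mapMatrix,
    fun i l k hlk => ?_⟩
  · rw [← Matrix.map_mul, hL, Matrix.map_one _ f.map_zero f.map_one]
  · rw [← Matrix.map_mul, ← Matrix.map_mul, map_apply, hPT i l k hlk, map_zero]

variable [LinearOrder m]

theorem schubertIntersects_iff_exists_unitary {G : ι → Matrix m m ℂ} {a : ι → β ↪ m} :
    SchubertIntersects G a ↔ ∃ (P : {P : Matrix m β ℂ // Pᴴ * P = 1}) (T : ι → unitaryGroup β ℂ),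
      ∀ i l k, a i l < k → (G i * (P.1 * (T i : Matrix β β ℂ))) k l = 0 := by
  refine ⟨fun ⟨P, T, ⟨L, hL⟩, hT, hPT⟩ => ?_, fun ⟨P, T, hPT⟩ => ?_⟩
  · obtain ⟨S, -, hS, hPS⟩ := exists_blockTriangular_conjTranspose_mul_self_eq_one
      (Fintype.equivFin β).injective hL
    have hinv : ∀ i, (S⁻¹ * T i)⁻¹ * (S⁻¹ * T i) = 1 := fun i =>
      nonsing_inv_mul _ ((isUnit_iff_isUnit_det _).1 ((isUnit_nonsing_inv_iff.2 hS).mul (hT i)))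
    choose R hR _ hTR using fun i =>
      exists_blockTriangular_conjTranspose_mul_self_eq_one (a i).injective (hinv i)
    refine ⟨⟨P * S, hPS⟩, fun i => ⟨S⁻¹ * T i * R i, mem_unitaryGroup_iff'.2 (hTR i)⟩, ?_⟩
    intro i l k hlk
    have hmul : G i * (P * S * (S⁻¹ * T i * R i)) = G i * (P * T i) * R i := by
      simp only [Matrix.mul_assoc, mul_nonsing_inv_cancel_left S _ ((isUnit_iff_isUnit_det _).1 hS)]
    rw [hmul, mul_apply]
    refine Finset.sum_eq_zero fun l' _ => ?_
    rcases le_or_gt (a i l') (a i l) with hle | hlt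
    · rw [hPT i l' k (hle.trans_lt hlk), zero_mul]
    · rw [hR i hlt, mul_zero]
  · exact ⟨P.1, fun i => T i, ⟨_, P.2⟩, fun i => ((Unitary.toUnits (T i)).isUnit), hPT⟩

theorem isClosed_setOf_schubertIntersects (a : ι → β ↪ m) :
    IsClosed {G : ι → Matrix m m ℂ | SchubertIntersects G a} := by
  have : CompactSpace {P : Matrix m β ℂ // Pᴴ * P = 1} :=
    isCompact_iff_compactSpace.1 isCompact_setOf_conjTranspose_mul_self_eq_one
  have hclosed : IsClosed {x : (ι → Matrix m m ℂ) ×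
      {P : Matrix m β ℂ // Pᴴ * P = 1} × (ι → unitaryGroup β ℂ) |
      ∀ i l k, a i l < k → (x.1 i * (x.2.1.1 * (x.2.2 i : Matrix β β ℂ))) k l = 0} := by
    simp only [Set.ofPred_forall]
    refine isClosed_iInter fun i => isClosed_iInter fun l => isClosed_iInter fun k =>
      isClosed_iInter fun _ => isClosed_eq (Continuous.matrix_elem ?_ k l) continuous_const
    fun_prop
  convert isClosedMap_fst_of_compactSpace _ hclosed
  ext G
  simp [schubertIntersects_iff_exists_unitary]

/-- Automorphisms of `ℂ` preserve Schubert intersections, so flags whose coordinates have a dense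
orbit under `Aut ℂ` intersect only in positions in which all flags intersect. -/
theorem exists_generic_schubertIntersects.{v} [Finite ι] :
    ∃ G : ι → Matrix m m ℂ, (∀ i, IsUnit (G i)) ∧
      ∀ {β : Type v} [Fintype β] [DecidableEq β] (a : ι → β ↪ m), SchubertIntersects G a →
        ∀ G' : ι → Matrix m m ℂ, SchubertIntersects G' a := by
  obtain ⟨g, hg⟩ := exists_dense_range_automorphism (ι × m × m)
  let toMatrices : (ι × m × m → ℂ) → ι → Matrix m m ℂ := fun x i => of fun k l => x (i, k, l)
  have hcont : Continuous toMatrices := by unfold toMatrices; fun_prop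
  have hsurj : toMatrices.Surjective := fun G => ⟨fun x => G x.1 x.2.1 x.2.2, rfl⟩
  have hdense := hsurj.denseRange.dense_image hcont hg
  have hmap : ∀ σ : ℂ ≃+* ℂ, toMatrices (fun x => σ (g x)) = fun i => (toMatrices g i).map σ :=
    fun _ => rfl
  refine ⟨toMatrices g, fun i => ?_, fun a ha G' => ?_⟩
  · have hopen : IsOpen {G : ι → Matrix m m ℂ | (G i).det ≠ 0} :=
      isOpen_ne_fun (by fun_prop) continuous_const
    obtain ⟨_, ⟨_, ⟨σ, rfl⟩, rfl⟩, hσ⟩ :=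
      hdense.exists_mem_open hopen ⟨fun _ => 1, by simp⟩
    rw [hmap] at hσ
    rw [isUnit_iff_isUnit_det, isUnit_iff_ne_zero]
    intro hdet
    exact hσ ((σ.map_det (toMatrices g i)).symm.trans (by rw [hdet, map_zero]))
  · refine (isClosed_setOf_schubertIntersects a).closure_subset_iff.2 ?_ (hdense G')
    rintro _ ⟨_, ⟨σ, rfl⟩, rfl⟩
    exact ha.map σ.toRingHom

end SchubertPositions

section Necessity

variable {m β : Type*} [Fintype m] [LinearOrder m]

theorem apply_le_sum_mul_norm_sq_of_forall_lt_eq_zero [DecidableEq β] {ν : m → ℝ}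
    (hν : Antitone ν) {P : Matrix m β ℂ} (hP : Pᴴ * P = 1) {j : m} {l : β}
    (hPl : ∀ k, j < k → P k l = 0) : ν j ≤ ∑ k, ν k * ‖P k l‖ ^ 2 := by
  rw [← mul_one (ν j), ← sum_norm_sq_col_eq_one hP l, Finset.mul_sum]
  refine Finset.sum_le_sum fun k _ => ?_
  rcases le_or_gt k j with hkj | hjk
  · gcongr
    exact hν hkj
  · simp [hPl k hjk]

variable [Fintype β]

theorem re_trace_conjTranspose_mul_diagonal_mul (P : Matrix m β ℂ) (ν : m → ℝ) :
    (Pᴴ * diagonal (fun k => (ν k : ℂ)) * P).trace.re = ∑ l, ∑ k, ν k * ‖P k l‖ ^ 2 := by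
  simp only [trace, diag_apply, Complex.re_sum]
  refine Finset.sum_congr rfl fun l _ => ?_
  rw [mul_apply, Complex.re_sum]
  refine Finset.sum_congr rfl fun k _ => ?_
  rw [mul_diagonal, conjTranspose_apply, mul_right_comm, RCLike.star_def,
    Complex.conj_mul', mul_comm, ← Complex.ofReal_pow, ← Complex.ofReal_mul, Complex.ofReal_re]

variable [DecidableEq β]

theorem sum_apply_le_re_trace_conjDiag {ν : m → ℝ} (hν : Antitone ν) (U : unitaryGroup m ℂ)
    {P : Matrix m β ℂ} (hP : Pᴴ * P = 1) (T : unitaryGroup β ℂ) {a : β → m}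
    (hPT : ∀ l k, a l < k → ((U : Matrix m m ℂ)ᴴ * (P * (T : Matrix β β ℂ))) k l = 0) :
    ∑ l, ν (a l) ≤ (Pᴴ * conjDiag U ν * P).trace.re := by
  have hU : (U : Matrix m m ℂ) * (U : Matrix m m ℂ)ᴴ = 1 := mem_unitaryGroup_iff.1 U.2
  have hT : (T : Matrix β β ℂ)ᴴ * (T : Matrix β β ℂ) = 1 := mem_unitaryGroup_iff'.1 T.2
  have hT' : (T : Matrix β β ℂ) * (T : Matrix β β ℂ)ᴴ = 1 := mem_unitaryGroup_iff.1 T.2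
  set Q := (U : Matrix m m ℂ)ᴴ * (P * (T : Matrix β β ℂ)) with hQ
  have hQQ : Qᴴ * Q = 1 := by
    calc
      Qᴴ * Q = (T : Matrix β β ℂ)ᴴ * (Pᴴ * ((U : Matrix m m ℂ) * (U : Matrix m m ℂ)ᴴ) * P) *
          (T : Matrix β β ℂ) := by
        simp only [hQ, conjTranspose_mul, conjTranspose_conjTranspose, Matrix.mul_assoc]
      _ = 1 := by rw [hU, Matrix.mul_one, hP, Matrix.mul_one, hT]
  calc
    ∑ l, ν (a l) ≤ ∑ l, ∑ k, ν k * ‖Q k l‖ ^ 2 := Finset.sum_le_sum fun l _ =>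
      apply_le_sum_mul_norm_sq_of_forall_lt_eq_zero hν hQQ (hPT l)
    _ = (Qᴴ * diagonal (fun k => (ν k : ℂ)) * Q).trace.re :=
      (re_trace_conjTranspose_mul_diagonal_mul Q ν).symm
    _ = ((T : Matrix β β ℂ)ᴴ * (Pᴴ * conjDiag U ν * P * (T : Matrix β β ℂ))).trace.re := by
      simp only [hQ, conjDiag_eq_mul, conjTranspose_mul, conjTranspose_conjTranspose,
        Matrix.mul_assoc]
    _ = (Pᴴ * conjDiag U ν * P).trace.re := by
      rw [trace_mul_comm, Matrix.mul_assoc, hT', Matrix.mul_one]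

theorem sum_apply_nonpos_of_sum_conjDiag_eq_zero {ι : Type*} [Fintype ι] {ν : ι → m → ℝ}
    (hν : ∀ i, Antitone (ν i)) {U : ι → unitaryGroup m ℂ} (hU : ∑ i, conjDiag (U i) (ν i) = 0)
    {a : ι → β ↪ m} (ha : SchubertIntersects (fun i => (U i : Matrix m m ℂ)ᴴ) a) :
    ∑ i, ∑ l, ν i (a i l) ≤ 0 := by
  obtain ⟨⟨P, hP⟩, T, hPT⟩ := schubertIntersects_iff_exists_unitary.1 ha
  calc
    ∑ i, ∑ l, ν i (a i l) ≤ ∑ i, (Pᴴ * conjDiag (U i) (ν i) * P).trace.re :=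
      Finset.sum_le_sum fun i _ => sum_apply_le_re_trace_conjDiag (hν i) (U i) hP (T i) (hPT i)
    _ = (Pᴴ * (∑ i, conjDiag (U i) (ν i)) * P).trace.re := by
      simp only [Matrix.mul_sum, Matrix.sum_mul, trace_sum, Complex.re_sum]
    _ = 0 := by rw [hU, Matrix.mul_zero, Matrix.zero_mul, trace_zero, Complex.zero_re]

end Necessity

section BruhatDecomposition

theorem exists_ne_zero_forall_gt_eq_zero {m K : Type*} [Finite m] [LinearOrder m] [Zero K]
    {v : m → K} (hv : v ≠ 0) :
    ∃ k, v k ≠ 0 ∧ ∀ j, k < j → v j = 0 := by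
  obtain ⟨k, hk⟩ := (Set.toFinite {k | v k ≠ 0}).exists_maximal (Function.ne_iff.1 hv)
  exact ⟨k, hk.prop, fun j hkj => not_not.1 fun h => hk.not_gt h hkj⟩

variable {m K : Type*} [Fintype m] [LinearOrder m] [Field K]

/-- Bruhat decomposition: among the vectors with leading coefficient `1` in position `l`, pick one
whose image under `T` vanishes as far up as possible. Subtracting multiples shows that the resulting
pivots are distinct. -/
theorem exists_isUpperTriangular_mul_submatrix_perm {T : Matrix m m K} (hT : IsUnit T) :
    ∃ (R : Matrix m m K) (π : Equiv.Perm m), R.IsUpperTriangular ∧ IsUnit R ∧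
      ((T * R).submatrix id π).IsUpperTriangular := by
  let monicVectors (l : m) : Set (m → K) := {c | c l = 1 ∧ ∀ j, l < j → c j = 0}
  let pivots (l : m) : Set m :=
    {k | ∃ c ∈ monicVectors l, (T *ᵥ c) k ≠ 0 ∧ ∀ j, k < j → (T *ᵥ c) j = 0}
  have exists_pivot {l : m} {c : m → K} (hc : c ∈ monicVectors l) :
      ∃ k ∈ pivots l, (T *ᵥ c) k ≠ 0 := by
    have hTc : T *ᵥ c ≠ 0 := fun h => one_ne_zero <| hc.1.symm.trans <|
      congrFun (mulVec_injective_of_isUnit hT (h.trans (mulVec_zero T).symm)) l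
    obtain ⟨k, hk, hkj⟩ := exists_ne_zero_forall_gt_eq_zero hTc
    exact ⟨k, ⟨c, hc, hk, hkj⟩, hk⟩
  have hsingle : ∀ l, Pi.single l 1 ∈ monicVectors l := fun l =>
    ⟨Pi.single_eq_same l 1, fun j hj => Pi.single_eq_of_ne hj.ne' 1⟩
  choose w hw using fun l => (Set.toFinite (pivots l)).exists_minimal
    ((exists_pivot (hsingle l)).imp fun _ h => h.1)
  choose c hc hcw hcj using fun l => (hw l).prop
  have hinj : w.Injective := fun l l' hww => by
    by_contra hne
    wlog hll : l < l' generalizing l l'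
    · exact this l' l hww.symm (Ne.symm hne) ((Ne.lt_or_gt hne).resolve_left hll)
    set α := (T *ᵥ c l') (w l) / (T *ᵥ c l) (w l) with hα
    obtain ⟨k, hk, hTk⟩ := exists_pivot (l := l') (c := c l' - α • c l)
      ⟨by simp [(hc l').1, (hc l).2 l' hll],
        fun j hj => by simp [(hc l').2 j hj, (hc l).2 j (hll.trans hj)]⟩
    refine hTk ?_
    rw [mulVec_sub, mulVec_smul, Pi.sub_apply, Pi.smul_apply, smul_eq_mul]
    rcases (le_of_not_gt ((hw l').not_lt hk)).eq_or_lt with rfl | hlt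
    · rw [hα, hww, div_mul_cancel₀ _ (hww ▸ hcw l), sub_self]
    · rw [hcj l' k hlt, hcj l k (hww ▸ hlt), mul_zero, sub_zero]
  have hRdiag : ∀ l, (of fun k l => c l k) l l = 1 := fun l => (hc l).1
  have hR : (of fun k l => c l k).IsUpperTriangular := fun k l (hlk : l < k) => (hc l).2 k hlk
  let ρ := Equiv.ofBijective w (Finite.injective_iff_bijective.1 hinj)
  refine ⟨_, ρ.symm, hR, ?_,
    fun k l (hlk : l < k) => hcj _ k ?_⟩
  · rw [isUnit_iff_isUnit_det, det_of_isUpperTriangular hR,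
      Finset.prod_congr rfl fun l _ => hRdiag l, Finset.prod_const_one]
    exact isUnit_one
  · exact (congrArg (· < k) (ρ.apply_symm_apply l)).mpr hlk

theorem det_submatrix_ne_zero_of_isUpperTriangular {N : Matrix m m K} (hN : N.IsUpperTriangular)
    (hunit : IsUnit N) {β : Type*} [Fintype β] [DecidableEq β] (f : β ↪ m) :
    (N.submatrix f f).det ≠ 0 := by
  have hdiag : ∏ l, N l l ≠ 0 := by
    rw [← det_of_isUpperTriangular hN]
    exact ((isUnit_iff_isUnit_det N).1 hunit).ne_zero
  let := LinearOrder.lift' f f.injective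
  have hNf : (N.submatrix f f).IsUpperTriangular := hN.submatrix
  have hprod : ∏ l, N (f l) (f l) ≠ 0 := Finset.prod_ne_zero_iff.2 fun l _ =>
    Finset.prod_ne_zero_iff.1 hdiag (f l) (Finset.mem_univ _)
  refine ne_of_eq_of_ne ?_ hprod
  convert det_of_isUpperTriangular hNf
  rfl

end BruhatDecomposition

section LeadingBlocks

variable {m R : Type*} [LinearOrder m] [LocallyFiniteOrderBot m]

/-- The square block of `X` formed by the rows and columns with index at most `j`. Its determinant
is the `j`-th leading principal minor. -/
def leadingBlock (X : Matrix m m R) (j : m) : Matrix (Finset.Iic j) (Finset.Iic j) R :=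
  X.submatrix (↑) (↑)

theorem leadingBlock_conjTranspose [Star R] (X : Matrix m m R) (j : m) :
    leadingBlock Xᴴ j = (leadingBlock X j)ᴴ :=
  rfl

variable [Fintype m]

theorem mul_submatrix_val_of_isUpperTriangular [CommSemiring R] {γ : Type*} (A : Matrix γ m R)
    {S : Matrix m m R} (hS : S.IsUpperTriangular) (j : m) :
    (A * S).submatrix id ((↑) : Finset.Iic j → m) =
      A.submatrix id (↑) * leadingBlock S j := by
  ext k l
  calc
    (A * S) k l = ∑ i, A k i * S i l := mul_apply
    _ = ∑ i ∈ Finset.Iic j, A k i * S i l := by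
      refine (Finset.sum_subset (Finset.subset_univ _) fun i _ hi => ?_).symm
      have hli : (l : m) < i := (Finset.mem_Iic.1 l.2).trans_lt (not_le.1 (mt Finset.mem_Iic.2 hi))
      rw [hS hli, mul_zero]
    _ = (A.submatrix id ((↑) : Finset.Iic j → m) * leadingBlock S j) k l :=
      (Finset.sum_coe_sort (Finset.Iic j) fun i => A k i * S i l).symm

theorem leadingBlock_mul_of_isUpperTriangular [CommSemiring R] (Y : Matrix m m R)
    {S : Matrix m m R} (hS : S.IsUpperTriangular) (j : m) :
    leadingBlock (Y * S) j = leadingBlock Y j * leadingBlock S j :=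
  congrArg (submatrix · (Subtype.val : Finset.Iic j → m) id)
    (mul_submatrix_val_of_isUpperTriangular Y hS j)

theorem leadingBlock_conjTranspose_mul_mul [CommSemiring R] [StarRing R] {S : Matrix m m R}
    (hS : S.IsUpperTriangular) (Y : Matrix m m R) (j : m) :
    leadingBlock (Sᴴ * Y * S) j = (leadingBlock S j)ᴴ * leadingBlock Y j * leadingBlock S j := by
  have hY : Sᴴ * Y = (Yᴴ * S)ᴴ := by rw [conjTranspose_mul, conjTranspose_conjTranspose]
  rw [leadingBlock_mul_of_isUpperTriangular _ hS, hY, leadingBlock_conjTranspose,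
    leadingBlock_mul_of_isUpperTriangular _ hS, conjTranspose_mul, leadingBlock_conjTranspose,
    conjTranspose_conjTranspose]

theorem det_leadingBlock_ne_zero_of_isUpperTriangular {K : Type*} [Field K] {S : Matrix m m K}
    (hS : S.IsUpperTriangular) (hunit : IsUnit S) (j : m) : (leadingBlock S j).det ≠ 0 :=
  det_submatrix_ne_zero_of_isUpperTriangular hS hunit (.subtype (· ∈ Finset.Iic j))

theorem det_leadingBlock_submatrix_perm_symm_ne_zero {K : Type*} [Field K] {T S : Matrix m m K}
    (hT : IsUnit T) (hS : S.IsUpperTriangular) (hSunit : IsUnit S) {π : Equiv.Perm m}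
    (hTS : ((T * S).submatrix id π).IsUpperTriangular) (j : m) :
    (leadingBlock (T.submatrix π.symm id) j).det ≠ 0 := by
  have hN : IsUnit ((T * S).submatrix id π) :=
    (isUnit_submatrix_equiv (Equiv.refl m) π).2 (hT.mul hSunit)
  have hminor : (leadingBlock (T.submatrix π.symm id * S) j).det ≠ 0 := by
    convert det_submatrix_ne_zero_of_isUpperTriangular hTS hN
      ((Function.Embedding.subtype (· ∈ Finset.Iic j)).trans π.symm.toEmbedding) using 2
    ext k l
    exact congrArg ((T * S) (π.symm k)) (π.apply_symm_apply l).symm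
  refine left_ne_zero_of_mul (b := (leadingBlock S j).det) ?_
  rwa [← det_mul, ← leadingBlock_mul_of_isUpperTriangular _ hS]

end LeadingBlocks

theorem schubertIntersects_of_isUpperTriangular {ι m K : Type*} [Fintype m] [LinearOrder m]
    [LocallyFiniteOrderBot m] [Field K] {B R : ι → Matrix m m K} {U W : Matrix m m K}
    {π : ι → Equiv.Perm m} (hWU : W * U = 1) (hB : ∀ i, IsUnit (B i))
    (hR : ∀ i, (R i).IsUpperTriangular) (hRunit : ∀ i, IsUnit (R i))
    (hN : ∀ i, ((W * B i * R i).submatrix id (π i)).IsUpperTriangular) (j : m) :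
    SchubertIntersects (fun i => (B i)⁻¹) fun i =>
      (Function.Embedding.subtype (· ∈ Finset.Iic j)).trans (π i).toEmbedding := by
  refine ⟨U.submatrix id (↑), fun i => leadingBlock ((W * B i * R i).submatrix id (π i)) j,
    ⟨W.submatrix (↑) id, ?_⟩, fun i => ?_, fun i l k hlk => ?_⟩
  · rw [← submatrix_mul _ _ _ _ _ Function.bijective_id, hWU, submatrix_one _ Subtype.val_injective]
  · have hW : IsUnit W := .of_mul_eq_one _ hWU
    rw [isUnit_iff_isUnit_det, isUnit_iff_ne_zero]
    exact det_leadingBlock_ne_zero_of_isUpperTriangular (hN i) ((isUnit_submatrix_equiv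
      (Equiv.refl m) (π i)).2 ((hW.mul (hB i)).mul (hRunit i))) j
  · have hmul : U * (W * B i * R i).submatrix id (π i) = (B i * R i).submatrix id (π i) :=
      calc U * (W * B i * R i).submatrix id (π i)
        _ = (U * W * (B i * R i)).submatrix id (π i) := by
          simp only [mul_assoc]; rfl
        _ = (B i * R i).submatrix id (π i) := by rw [mul_eq_one_comm.1 hWU, one_mul]
    refine (congrArg (fun Q => ((B i)⁻¹ * Q) k l)
      (mul_submatrix_val_of_isUpperTriangular U (hN i) j)).symm.trans ?_
    rw [hmul]
    calc ((B i)⁻¹ * ((B i * R i).submatrix id (π i)).submatrix id Subtype.val) k l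
      _ = ((B i)⁻¹ * (B i * R i)) k (π i l) := rfl
      _ = R i k (π i l) := by
        rw [nonsing_inv_mul_cancel_left _ _ ((isUnit_iff_isUnit_det _).1 (hB i))]
      _ = 0 := hR i hlk

section DeterminantInequalities

open scoped ComplexOrder

variable {m β : Type*} [Fintype β] [DecidableEq β]

theorem one_le_norm_det_one_add {B : Matrix β β ℂ} (hB : B.PosSemidef) : 1 ≤ ‖(1 + B).det‖ := by
  have hdiag : 1 + B = conjDiag hB.1.eigenvectorUnitary fun i => hB.1.eigenvalues i + 1 := by
    rw [conjDiag_add_const, ← eq_conjDiag_eigenvalues hB.1, Complex.ofReal_one, one_smul, add_comm]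
  rw [hdiag, det_conjDiag, Complex.norm_real]
  exact (Finset.one_le_prod fun i _ => le_add_of_nonneg_left (hB.eigenvalues_nonneg i)).trans
    (Real.le_norm_self _)

theorem norm_det_le_norm_det_add {A B : Matrix β β ℂ} (hA : A.PosSemidef) (hB : B.PosSemidef) :
    ‖A.det‖ ≤ ‖(A + B).det‖ := by
  rcases eq_or_ne A.det 0 with h0 | h0
  · rw [h0, norm_zero]
    exact norm_nonneg _
  obtain ⟨T, hT⟩ : ∃ T : Matrix β β ℂ, Tᴴ * A * T = 1 := by
    let := LinearOrder.lift' _ (Fintype.equivFin β).injective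
    obtain ⟨T, -, hT⟩ :=
      exists_isUpperTriangular_conjTranspose_mul_mul_eq_one (hA.posDef_iff_det_ne_zero.2 h0)
    exact ⟨T, by convert hT <;> rfl⟩
  have hTdet : ‖A.det‖ * ‖Tᴴ.det * T.det‖ = 1 := by
    rw [← norm_mul, ← mul_assoc, mul_comm A.det, ← det_mul, ← det_mul, hT, det_one, norm_one]
  have hle : 1 ≤ ‖(A + B).det‖ * ‖Tᴴ.det * T.det‖ := by
    convert one_le_norm_det_one_add (hB.conjTranspose_mul_mul_same T) using 1
    rw [← norm_mul, ← mul_assoc, mul_comm (A + B).det, ← det_mul, ← det_mul, mul_add, add_mul, hT]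
  exact le_of_mul_le_mul_right (hTdet.trans_le hle)
    (pos_of_mul_pos_right (hTdet ▸ one_pos) (norm_nonneg _))

theorem prod_mul_norm_det_submatrix_sq_le_norm_det [Fintype m] [DecidableEq m] (C : Matrix m β ℂ)
    {d : m → ℝ} (hd : 0 ≤ d) (e : β ↪ m) :
    (∏ l, d (e l)) * ‖(C.submatrix e id).det‖ ^ 2 ≤
      ‖(Cᴴ * diagonal (fun k => (d k : ℂ)) * C).det‖ := by
  classical
  let weightedGram (s : Set m) : Matrix β β ℂ :=
    Cᴴ * diagonal (s.indicator fun k => (d k : ℂ)) * C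
  have hpos : ∀ s, (weightedGram s).PosSemidef := fun s =>
    (posSemidef_diagonal_iff.2 fun k => Set.indicator_nonneg (fun k _ =>
      Complex.zero_le_real.2 (hd k)) k).conjTranspose_mul_mul_same C
  have hrange : weightedGram (Set.range e) =
      (C.submatrix e id)ᴴ * diagonal (fun l => (d (e l) : ℂ)) * C.submatrix e id := by
    ext k l
    refine mul_apply.trans (Eq.trans ?_ mul_apply.symm)
    refine (Fintype.sum_of_injective e e.injective _ _ (fun x hx => ?_) fun x => ?_).symm
    · rw [mul_diagonal, Set.indicator_of_notMem hx, mul_zero, zero_mul]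
    · rw [mul_diagonal, mul_diagonal, Set.indicator_of_mem (Set.mem_range_self x)]; rfl
  calc
    (∏ l, d (e l)) * ‖(C.submatrix e id).det‖ ^ 2 = ‖(weightedGram (Set.range e)).det‖ := by
      rw [hrange, det_mul, det_mul, det_conjTranspose, det_diagonal, norm_mul, norm_mul, norm_star,
        mul_right_comm, ← sq, mul_comm, ← Complex.ofReal_prod, Complex.norm_real,
        Real.norm_of_nonneg (Finset.prod_nonneg fun l _ => hd (e l))]
    _ ≤ ‖(weightedGram (Set.range e) + weightedGram (Set.range e)ᶜ).det‖ :=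
      norm_det_le_norm_det_add (hpos _) (hpos _)
    _ = ‖(Cᴴ * diagonal (fun k => (d k : ℂ)) * C).det‖ := by
      rw [← Matrix.add_mul, ← Matrix.mul_add, diagonal_add]
      congr
      exact Set.indicator_self_add_compl _ _

end DeterminantInequalities

theorem hasDerivAt_log_norm_det_one_add_smul {β : Type*} [Fintype β] [DecidableEq β]
    (W : Matrix β β ℂ) :
    HasDerivAt (fun s : ℝ => Real.log ‖(1 + (s : ℂ) • W).det‖) W.trace.re 0 := by
  have heval : ∀ z : ℂ, (1 + (X : ℂ[X]) • W.map C).det.eval z = (1 + z • W).det := fun z => by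
    rw [← coe_evalRingHom, RingHom.map_det]
    congr 1
    ext k l
    by_cases hkl : k = l <;> simp [one_apply, hkl, mul_comm z]
  have hdet : HasDerivAt (fun z : ℂ => (1 + z • W).det) W.trace ((0 : ℝ) : ℂ) := by
    simp_rw [← heval, ← derivative_det_one_add_X_smul W, Complex.ofReal_zero]
    exact Polynomial.hasDerivAt _ 0
  have hlog := hdet.clog (by simp)
  simpa [Complex.log_re] using hlog.real_of_complex

section LogPower

variable {m : Type*} [Fintype m] [LinearOrder m] [LocallyFiniteOrderBot m]

/-- The logarithm of the generalized power function `∏ j, |Δ j Y| ^ c j`, where `Δ j Y` are the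
leading principal minors of `Y`. -/
noncomputable def logPower (c : m → ℝ) (Y : Matrix m m ℂ) : ℝ :=
  ∑ j, c j * Real.log ‖(leadingBlock Y j).det‖

theorem continuousAt_logPower (c : m → ℝ) {Y : Matrix m m ℂ}
    (hY : ∀ j, (leadingBlock Y j).det ≠ 0) : ContinuousAt (logPower c) Y :=
  tendsto_finsetSum _ fun j _ =>
    (ContinuousAt.log (f := fun Z => ‖(leadingBlock Z j).det‖) (by unfold leadingBlock; fun_prop)
      (norm_ne_zero_iff.2 (hY j))).const_mul (c j)

theorem logPower_conjTranspose_mul_mul (c : m → ℝ) {S Y : Matrix m m ℂ}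
    (hS : S.IsUpperTriangular) (hSunit : IsUnit S) (hY : ∀ j, (leadingBlock Y j).det ≠ 0) :
    logPower c (Sᴴ * Y * S) = logPower c Y + 2 * logPower c S := by
  simp only [logPower, Finset.mul_sum, ← Finset.sum_add_distrib]
  refine Finset.sum_congr rfl fun j _ => ?_
  have hSj := det_leadingBlock_ne_zero_of_isUpperTriangular hS hSunit j
  rw [leadingBlock_conjTranspose_mul_mul hS, det_mul, det_mul, det_conjTranspose, norm_mul,
    norm_mul, norm_star, Real.log_mul (by simp [hSj, hY]) (by simpa), Real.log_mul (by simpa)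
    (by simp [hY])]
  ring

theorem prod_mul_norm_det_leadingBlock_sq_le {d : m → ℝ} (hd : 0 ≤ d) (C : Matrix m m ℂ)
    (e : Equiv.Perm m) (j : m) :
    (∏ l : Finset.Iic j, d (e l)) * ‖(leadingBlock (C.submatrix e id) j).det‖ ^ 2 ≤
      ‖(leadingBlock (Cᴴ * diagonal (fun k => (d k : ℂ)) * C) j).det‖ := by
  have hblock : leadingBlock (Cᴴ * diagonal (fun k => (d k : ℂ)) * C) j =
      (C.submatrix id (Subtype.val : Finset.Iic j → m))ᴴ * diagonal (fun k => (d k : ℂ)) *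
        C.submatrix id (Subtype.val : Finset.Iic j → m) := rfl
  have hminor := prod_mul_norm_det_submatrix_sq_le_norm_det (d := d)
    (C.submatrix id (Subtype.val : Finset.Iic j → m)) hd
    ((Function.Embedding.subtype (· ∈ Finset.Iic j)).trans e.toEmbedding)
  rw [← hblock] at hminor
  exact hminor

theorem sum_log_mul_tailSum_add_le_logPower [LocallyFiniteOrderTop m] {c d : m → ℝ} (hc : 0 ≤ c)
    (hd : ∀ k, 0 < d k) {C : Matrix m m ℂ} (e : Equiv.Perm m)
    (hC : ∀ j, (leadingBlock (C.submatrix e id) j).det ≠ 0) :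
    ∑ k, Real.log (d (e k)) * tailSum c k + 2 * logPower c (C.submatrix e id) ≤
      logPower c (Cᴴ * diagonal (fun k => (d k : ℂ)) * C) := by
  rw [sum_mul_tailSum, logPower, logPower, Finset.mul_sum, ← Finset.sum_add_distrib]
  refine Finset.sum_le_sum fun j _ => ?_
  have hprod : 0 < ∏ l : Finset.Iic j, d (e l) := Finset.prod_pos fun l _ => hd _
  have hnorm := norm_pos_iff.2 (hC j)
  have hminor := prod_mul_norm_det_leadingBlock_sq_le (fun k => (hd k).le) C e j
  calc
    c j * ∑ k ∈ Finset.Iic j, Real.log (d (e k)) +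
          2 * (c j * Real.log ‖(leadingBlock (C.submatrix e id) j).det‖) =
        c j * Real.log ((∏ l : Finset.Iic j, d (e l)) *
          ‖(leadingBlock (C.submatrix e id) j).det‖ ^ 2) := by
      rw [Real.log_mul hprod.ne' (pow_pos hnorm 2).ne', Real.log_pow,
        Real.log_prod fun l _ => (hd _).ne', Finset.sum_coe_sort _ fun k => Real.log (d (e k))]
      push_cast
      ring
    _ ≤ c j * Real.log ‖(leadingBlock (Cᴴ * diagonal (fun k => (d k : ℂ)) * C) j).det‖ := by
      exact mul_le_mul_of_nonneg_left (Real.log_le_log (by positivity) hminor) (hc j)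

theorem hasDerivAt_logPower_one_add_smul [LocallyFiniteOrderTop m] (c : m → ℝ)
    (W : Matrix m m ℂ) :
    HasDerivAt (fun s : ℝ => logPower c (1 + (s : ℂ) • W)) (∑ l, (W l l).re * tailSum c l) 0 := by
  rw [sum_mul_tailSum]
  have hblock : ∀ (j : m) (s : ℝ), leadingBlock (1 + (s : ℂ) • W) j =
      1 + (s : ℂ) • leadingBlock W j := fun j s => by
    rw [← submatrix_one (Subtype.val : Finset.Iic j → m) Subtype.val_injective]
    rfl
  simp only [logPower, hblock]
  refine HasDerivAt.fun_sum fun j _ => HasDerivAt.const_mul (c j) ?_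
  have htrace : ∑ l ∈ Finset.Iic j, (W l l).re = (leadingBlock W j).trace.re := by
    rw [← Finset.sum_coe_sort, ← Complex.re_sum]
    rfl
  rw [htrace]
  exact hasDerivAt_log_norm_det_one_add_smul _

end LogPower

section KempfNess

open scoped ComplexOrder

theorem det_leadingBlock_ne_zero_of_posDef {m : Type*} [LinearOrder m]
    [LocallyFiniteOrderBot m] {X : Matrix m m ℂ} (hX : X.PosDef) (j : m) :
    (leadingBlock X j).det ≠ 0 :=
  (hX.submatrix Subtype.val_injective).det_pos.ne'

variable {ι m : Type*} [Fintype ι] [Fintype m] [LinearOrder m] [LocallyFiniteOrderBot m]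

/-- The Kempf–Ness function, on positive definite forms `X`, of the flags spanned by the columns of
the matrices `B i`: its critical points are the forms for which the weighted flags are balanced.
The weight of the `l`-th column of `B i` is `tailSum (c i) l`. -/
noncomputable def kempfNess (B : ι → Matrix m m ℂ) (c : ι → m → ℝ) (τ : ℝ)
    (X : Matrix m m ℂ) : ℝ :=
  ∑ i, logPower (c i) ((B i)ᴴ * X * B i) - τ * Real.log ‖X.det‖

/-- Slope semistability, with slope `τ`, of the flags spanned by the columns of the matrices `B i`,
where the `l`-th step of the `i`-th flag carries the weight `ν i l`. A subspace whose position with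
respect to the `i`-th flag is `a i` has degree `∑ i, ∑ l, ν i (a i l)`. -/
def IsSlopeSemistable (B : ι → Matrix m m ℂ) (ν : ι → m → ℝ) (τ : ℝ) : Prop :=
  ∑ i, ∑ k, ν i k = τ * Fintype.card m ∧
    ∀ (j : m) (a : ι → Finset.Iic j ↪ m), SchubertIntersects (fun i => (B i)⁻¹) a →
      ∑ i, ∑ l, ν i (a i l) ≤ τ * (Finset.Iic j).card

theorem continuousAt_kempfNess {B : ι → Matrix m m ℂ} (hB : ∀ i, IsUnit (B i)) (c : ι → m → ℝ)
    (τ : ℝ) {X : Matrix m m ℂ} (hX : X.PosDef) : ContinuousAt (kempfNess B c τ) X := by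
  refine ContinuousAt.sub (tendsto_finsetSum _ fun i _ => ?_) (continuousAt_const.mul ?_)
  · have hpos : ((B i)ᴴ * X * B i).PosDef :=
      hX.conjTranspose_mul_mul_same (mulVec_injective_of_isUnit (hB i))
    exact (continuousAt_logPower (c i) (det_leadingBlock_ne_zero_of_posDef hpos)).comp
      (f := fun X => (B i)ᴴ * X * B i) (by fun_prop)
  · exact ContinuousAt.log (f := fun X : Matrix m m ℂ => ‖X.det‖) (by fun_prop)
      (norm_ne_zero_iff.2 hX.det_pos.ne')

theorem posDef_conjDiag_iff {m : Type*} [Fintype m] [DecidableEq m] {U : unitaryGroup m ℂ}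
    {d : m → ℝ} : (conjDiag U d).PosDef ↔ ∀ k, 0 < d k := by
  have hU : IsUnit (U : Matrix m m ℂ) := (Unitary.toUnits U).isUnit
  rw [conjDiag_eq_mul, ← star_eq_conjTranspose, hU.posDef_star_right_conjugate_iff,
    posDef_diagonal_iff]
  simp only [Complex.zero_lt_real]

end KempfNess

section BoundedBelow

open scoped ComplexOrder

variable {ι : Type*} [Fintype ι] {n : ℕ} {B : ι → Matrix (Fin n) (Fin n) ℂ} {c : ι → Fin n → ℝ}
  {τ : ℝ}

theorem two_mul_sum_logPower_le_kempfNess (hc : ∀ i, 0 ≤ c i)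
    (htotal : ∑ i, ∑ k, tailSum (c i) k = τ * n) {π : ι → Equiv.Perm (Fin n)}
    (hslope : ∀ j, ∑ i, ∑ k ∈ Finset.Iic j, tailSum (c i) (π i k) ≤ τ * (Finset.Iic j).card)
    {U : unitaryGroup (Fin n) ℂ}
    (hminor : ∀ i j,
      (leadingBlock (((U : Matrix (Fin n) (Fin n) ℂ)ᴴ * B i).submatrix (π i).symm id) j).det ≠ 0)
    {d : Fin n → ℝ} (hd : Monotone d) (hd0 : ∀ k, 0 < d k) :
    2 * ∑ i, logPower (c i)
        (((U : Matrix (Fin n) (Fin n) ℂ)ᴴ * B i).submatrix (π i).symm id) ≤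
      kempfNess B c τ (conjDiag U d) := by
  have hlower : ∀ i, ∑ k, Real.log (d k) * tailSum (c i) (π i k) + 2 * logPower (c i)
        (((U : Matrix (Fin n) (Fin n) ℂ)ᴴ * B i).submatrix (π i).symm id) ≤
      logPower (c i) ((B i)ᴴ * conjDiag U d * B i) := fun i => by
    have hsum := sum_log_mul_tailSum_add_le_logPower (hc i) hd0 (π i).symm (hminor i)
    rw [← Equiv.sum_comp (π i)] at hsum
    simpa only [Equiv.symm_apply_apply, conjTranspose_mul, conjTranspose_conjTranspose,
      conjDiag_eq_mul, mul_assoc] using hsum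
  have hdet : Real.log ‖(conjDiag U d).det‖ = ∑ k, Real.log (d k) := by
    rw [det_conjDiag, Complex.norm_real, Real.norm_eq_abs, Real.log_abs,
      Real.log_prod fun k _ => (hd0 k).ne']
  have habel : 0 ≤ ∑ k, (∑ i, tailSum (c i) (π i k) - τ) * Real.log (d k) := by
    refine sum_mul_nonneg_of_monotone (fun k l hkl => Real.log_le_log (hd0 k) (hd hkl))
      (fun j => ?_) ?_
    · rw [Finset.sum_sub_distrib, Finset.sum_comm, Finset.sum_const, nsmul_eq_mul, mul_comm _ τ]
      exact sub_nonpos.2 (hslope j)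
    · rw [Finset.sum_sub_distrib, Finset.sum_comm, Finset.sum_const, nsmul_eq_mul, mul_comm _ τ,
        Finset.card_univ, Fintype.card_fin, ← htotal, sub_eq_zero]
      exact Finset.sum_congr rfl fun i _ => Equiv.sum_comp (π i) _
  have hsplit : ∑ k, (∑ i, tailSum (c i) (π i k) - τ) * Real.log (d k) =
      ∑ i, ∑ k, Real.log (d k) * tailSum (c i) (π i k) - τ * ∑ k, Real.log (d k) := by
    rw [Finset.sum_comm, Finset.mul_sum, ← Finset.sum_sub_distrib]
    refine Finset.sum_congr rfl fun k _ => ?_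
    rw [sub_mul, mul_comm, Finset.mul_sum]
  have htotal_lower := Finset.sum_le_sum fun i (_ : i ∈ Finset.univ) => hlower i
  rw [Finset.sum_add_distrib, ← Finset.mul_sum] at htotal_lower
  rw [kempfNess, hdet]
  linarith

theorem exists_forall_mem_nhds_le_kempfNess (hB : ∀ i, IsUnit (B i)) (hc : ∀ i, 0 ≤ c i)
    (hss : IsSlopeSemistable B (fun i => tailSum (c i)) τ) (U : unitaryGroup (Fin n) ℂ) :
    ∃ K, ∀ᶠ V in nhds U, ∀ d, Monotone d → (∀ k, 0 < d k) → K ≤ kempfNess B c τ (conjDiag V d) := by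
  have hU : (U : Matrix (Fin n) (Fin n) ℂ)ᴴ * U = 1 := mem_unitaryGroup_iff'.1 U.2
  have hunit : ∀ i, IsUnit ((U : Matrix (Fin n) (Fin n) ℂ)ᴴ * B i) := fun i =>
    (IsUnit.of_mul_eq_one _ hU).mul (hB i)
  choose R π hR hRunit hN using fun i => exists_isUpperTriangular_mul_submatrix_perm (hunit i)
  let moved (V : unitaryGroup (Fin n) ℂ) (i : ι) : Matrix (Fin n) (Fin n) ℂ :=
    ((V : Matrix (Fin n) (Fin n) ℂ)ᴴ * B i).submatrix (π i).symm id
  have hminor : ∀ i j, (leadingBlock (moved U i) j).det ≠ 0 := fun i =>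
    det_leadingBlock_submatrix_perm_symm_ne_zero (hunit i) (hR i) (hRunit i) (hN i)
  have hslope : ∀ j, ∑ i, ∑ k ∈ Finset.Iic j, tailSum (c i) (π i k) ≤
      τ * (Finset.Iic j).card := fun j => by
    refine le_of_eq_of_le (Finset.sum_congr rfl fun i _ => ?_)
      (hss.2 j _ (schubertIntersects_of_isUpperTriangular hU hB hR hRunit hN j))
    exact (Finset.sum_coe_sort _ fun k => tailSum (c i) (π i k)).symm
  have hcont : ∀ i, Continuous fun V => moved V i := fun i => by fun_prop
  have hlog : ContinuousAt (fun V => 2 * ∑ i, logPower (c i) (moved V i)) U :=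
    continuousAt_const.mul <| tendsto_finsetSum _ fun i _ =>
      (continuousAt_logPower (c i) (hminor i)).comp (f := fun V => moved V i) (hcont i).continuousAt
  have hminor_near : ∀ᶠ V in nhds U, ∀ i j, (leadingBlock (moved V i) j).det ≠ 0 := by
    refine Filter.eventually_all.2 fun i => Filter.eventually_all.2 fun j => ?_
    refine ContinuousAt.eventually_ne ?_ (hminor i j)
    unfold leadingBlock
    fun_prop
  refine ⟨2 * ∑ i, logPower (c i) (moved U i) - 1, ?_⟩
  filter_upwards [hminor_near, hlog.eventually_const_lt (sub_one_lt _)] with V hV hlt d hd hd0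
  exact hlt.le.trans (two_mul_sum_logPower_le_kempfNess hc (by simpa using hss.1) hslope hV hd hd0)

theorem exists_forall_posDef_le_kempfNess (hB : ∀ i, IsUnit (B i)) (hc : ∀ i, 0 ≤ c i)
    (hss : IsSlopeSemistable B (fun i => tailSum (c i)) τ) :
    ∃ K, ∀ X : Matrix (Fin n) (Fin n) ℂ, X.PosDef → K ≤ kempfNess B c τ X := by
  have huniform : ∃ K, ∀ V ∈ (Set.univ : Set (unitaryGroup (Fin n) ℂ)), ∀ d, Monotone d →
      (∀ k, 0 < d k) → K ≤ kempfNess B c τ (conjDiag V d) := by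
    refine isCompact_univ.induction_on (p := fun s => ∃ K, ∀ V ∈ s, ∀ d, Monotone d →
      (∀ k, 0 < d k) → K ≤ kempfNess B c τ (conjDiag V d)) ⟨0, by simp⟩ ?_ ?_ fun U _ => ?_
    · rintro s t hst ⟨K, hK⟩
      exact ⟨K, fun V hV => hK V (hst hV)⟩
    · rintro s t ⟨K, hK⟩ ⟨K', hK'⟩
      refine ⟨min K K', fun V hV d hd hd0 => ?_⟩
      exact hV.elim (fun h => (min_le_left _ _).trans (hK V h d hd hd0))
        fun h => (min_le_right _ _).trans (hK' V h d hd hd0)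
    · obtain ⟨K, hK⟩ := exists_forall_mem_nhds_le_kempfNess hB hc hss U
      exact ⟨_, mem_nhdsWithin_of_mem_nhds hK, K, fun V hV => hV⟩
  obtain ⟨K, hK⟩ := huniform
  refine ⟨K, fun X hX => ?_⟩
  obtain ⟨U, d, hd, rfl⟩ := exists_monotone_conjDiag hX.isHermitian
  exact hK U trivial d hd (posDef_conjDiag_iff.1 hX)

end BoundedBelow

section LogDetPotential

open scoped ComplexOrder Matrix.Norms.Frobenius

variable {m : Type*} [Fintype m]

theorem frobenius_norm_sq_eq_re_trace (g : Matrix m m ℂ) : ‖g‖ ^ 2 = (gᴴ * g).trace.re := by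
  rw [frobenius_norm_def, ← Real.sqrt_eq_rpow, Real.sq_sqrt (by positivity), Finset.sum_comm,
    Matrix.trace, Complex.re_sum]
  refine Finset.sum_congr rfl fun l _ => ?_
  rw [diag_apply, mul_apply, Complex.re_sum]
  refine Finset.sum_congr rfl fun k _ => ?_
  rw [conjTranspose_apply, RCLike.star_def, Complex.conj_mul', Real.rpow_two, ← Complex.ofReal_pow,
    Complex.ofReal_re]

theorem continuousAt_comp_conjTranspose_mul_self {F : Matrix m m ℂ → ℝ} {g : Matrix m m ℂ}
    (hF : ContinuousAt F (gᴴ * g)) : ContinuousAt (fun g => F (gᴴ * g)) g :=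
  hF.comp (f := fun g => gᴴ * g) (by fun_prop)

variable [DecidableEq m]

/-- The strictly convex potential `tr X - log det X`, whose sublevel sets in the cone of positive
definite matrices are compact. -/
noncomputable def logDetPotential (X : Matrix m m ℂ) : ℝ :=
  X.trace.re - Real.log ‖X.det‖

theorem posDef_conjTranspose_mul_self_of_isUnit {g : Matrix m m ℂ} (hg : IsUnit g) :
    (gᴴ * g).PosDef :=
  .conjTranspose_mul_self g (mulVec_injective_of_isUnit hg)

theorem half_re_trace_le_logDetPotential {X : Matrix m m ℂ} (hX : X.PosDef) :
    X.trace.re / 2 ≤ logDetPotential X := by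
  have hX' := eq_conjDiag_eigenvalues hX.isHermitian
  have hpos := hX.eigenvalues_pos
  set d := hX.isHermitian.eigenvalues
  have hlog : ∀ i, Real.log (d i) ≤ d i / 2 := fun i => by
    have h := Real.log_le_sub_one_of_pos (half_pos (hpos i))
    rw [Real.log_div (hpos i).ne' two_ne_zero] at h
    linarith [Real.log_two_lt_d9]
  have hsum := Finset.sum_le_sum fun i (_ : i ∈ Finset.univ) => hlog i
  rw [← Finset.sum_div] at hsum
  rw [logDetPotential, hX', trace_conjDiag, det_conjDiag, Complex.ofReal_re, Complex.norm_real,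
    Real.norm_eq_abs, Real.log_abs, Real.log_prod fun i _ => (hpos i).ne']
  linarith

theorem continuousAt_logDetPotential {X : Matrix m m ℂ} (hX : X.PosDef) :
    ContinuousAt logDetPotential X :=
  ContinuousAt.sub (f := fun X : Matrix m m ℂ => X.trace.re) (by fun_prop)
    (ContinuousAt.log (f := fun X : Matrix m m ℂ => ‖X.det‖) (by fun_prop)
      (norm_ne_zero_iff.2 hX.det_pos.ne'))

theorem isCompact_setOf_isUnit_logDetPotential_le (Q : ℝ) :
    IsCompact {g : Matrix m m ℂ | IsUnit g ∧ logDetPotential (gᴴ * g) ≤ Q} := by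
  let box : Set (Matrix m m ℂ) :=
    Metric.closedBall 0 √(2 * Q) ∩ {g | Real.exp (-Q) ≤ ‖(gᴴ * g).det‖}
  have hbox_unit : ∀ g ∈ box, IsUnit g := fun g hg => by
    have hdet : (gᴴ * g).det ≠ 0 := norm_pos_iff.1 ((Real.exp_pos _).trans_le hg.2)
    rw [isUnit_iff_isUnit_det, isUnit_iff_ne_zero]
    exact right_ne_zero_of_mul (det_mul gᴴ g ▸ hdet)
  have hbox_closed : IsClosed {g : Matrix m m ℂ | Real.exp (-Q) ≤ ‖(gᴴ * g).det‖} :=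
    isClosed_le continuous_const (by fun_prop)
  have hmem : {g : Matrix m m ℂ | IsUnit g ∧ logDetPotential (gᴴ * g) ≤ Q} =
      box ∩ (fun g => logDetPotential (gᴴ * g)) ⁻¹' Set.Iic Q := by
    ext g
    refine ⟨fun ⟨hg, hQ⟩ => ⟨⟨?_, ?_⟩, hQ⟩, fun ⟨hg, hQ⟩ => ⟨hbox_unit g hg, hQ⟩⟩
    all_goals have hpos := posDef_conjTranspose_mul_self_of_isUnit hg
    all_goals have hhalf := half_re_trace_le_logDetPotential hpos
    · rw [mem_closedBall_zero_iff]
      refine Real.le_sqrt_of_sq_le ?_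
      rw [frobenius_norm_sq_eq_re_trace]
      linarith
    · refine (Real.le_log_iff_exp_le (norm_pos_iff.2 hpos.det_pos.ne')).1 ?_
      have hQ' : (gᴴ * g).trace.re - Real.log ‖(gᴴ * g).det‖ ≤ Q := hQ
      linarith [frobenius_norm_sq_eq_re_trace g, sq_nonneg ‖g‖]
  have := FiniteDimensional.proper ℂ (Matrix m m ℂ)
  have hcont : ContinuousOn (fun g : Matrix m m ℂ => logDetPotential (gᴴ * g)) box := fun g hg =>
    (continuousAt_comp_conjTranspose_mul_self (continuousAt_logDetPotential
      (posDef_conjTranspose_mul_self_of_isUnit (hbox_unit g hg)))).continuousWithinAt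
  rw [hmem]
  exact ((isCompact_closedBall _ _).inter_right hbox_closed).of_isClosed_subset
    (hcont.preimage_isClosed_of_isClosed (Metric.isClosed_closedBall.inter hbox_closed)
      isClosed_Iic)
    Set.inter_subset_left

open scoped MatrixOrder Matrix.Norms.L2Operator in
theorem exists_isUnit_conjTranspose_mul_self_eq {X : Matrix m m ℂ} (hX : X.PosDef) :
    ∃ g : Matrix m m ℂ, IsUnit g ∧ gᴴ * g = X := by
  obtain ⟨g, hg, hgX⟩ :=
    CStarAlgebra.isStrictlyPositive_iff_eq_star_mul_self.1 hX.isStrictlyPositive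
  exact ⟨g, hg, hgX.symm⟩

theorem exists_forall_posDef_add_logDetPotential_le {F : Matrix m m ℂ → ℝ}
    (hF : ∀ X, X.PosDef → ContinuousAt F X) {K : ℝ} (hK : ∀ X, X.PosDef → K ≤ F X) {ε : ℝ}
    (hε : 0 < ε) :
    ∃ g : Matrix m m ℂ, IsUnit g ∧ ∀ X : Matrix m m ℂ, X.PosDef →
      F (gᴴ * g) + ε * logDetPotential (gᴴ * g) ≤ F X + ε * logDetPotential X := by
  let reg (X : Matrix m m ℂ) : ℝ := F X + ε * logDetPotential X
  let sublevel : Set (Matrix m m ℂ) :=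
    {g | IsUnit g ∧ logDetPotential (gᴴ * g) ≤ (reg 1 - K) / ε}
  have hsublevel : ∀ g, IsUnit g → reg (gᴴ * g) ≤ reg 1 → g ∈ sublevel := fun g hg hle => by
    refine ⟨hg, (le_div_iff₀' hε).2 ?_⟩
    change F (gᴴ * g) + ε * logDetPotential (gᴴ * g) ≤ reg 1 at hle
    linarith [hK _ (posDef_conjTranspose_mul_self_of_isUnit hg)]
  have hone : (1 : Matrix m m ℂ) ∈ sublevel := hsublevel 1 isUnit_one (by simp)
  have hcont : ContinuousOn (fun g : Matrix m m ℂ => reg (gᴴ * g)) sublevel := fun g hg => by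
    have hpos := posDef_conjTranspose_mul_self_of_isUnit hg.1
    exact (continuousAt_comp_conjTranspose_mul_self ((hF _ hpos).add
      (continuousAt_const.mul (continuousAt_logDetPotential hpos)))).continuousWithinAt
  obtain ⟨g, hg, hmin⟩ :=
    (isCompact_setOf_isUnit_logDetPotential_le _).exists_isMinOn ⟨1, hone⟩ hcont
  refine ⟨g, hg.1, fun X hX => ?_⟩
  obtain ⟨g', hg', rfl⟩ := exists_isUnit_conjTranspose_mul_self_eq hX
  by_cases hle : reg (g'ᴴ * g') ≤ reg 1
  · exact hmin (hsublevel g' hg' hle)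
  · refine (hmin hone).trans (le_trans ?_ (not_le.1 hle).le)
    simp

end LogDetPotential

section CriticalPoint

open scoped ComplexOrder Matrix.Norms.Frobenius

theorem eventually_posDef_one_add_smul {m : Type*} [Finite m] [DecidableEq m] {Z : Matrix m m ℂ}
    (hZ : Z.IsHermitian) : ∀ᶠ s : ℝ in nhds 0, (1 + (s : ℂ) • Z).PosDef := by
  cases nonempty_fintype m
  set U := hZ.eigenvectorUnitary
  set d := hZ.eigenvalues
  have hZd : Z = conjDiag U d := eq_conjDiag_eigenvalues hZ
  have hline : ∀ s : ℝ, 1 + (s : ℂ) • Z = conjDiag U fun k => s * d k + 1 := fun s => by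
    rw [conjDiag_add_const, Complex.ofReal_one, one_smul, add_comm, hZd, conjDiag, conjDiag,
      ← map_smul, ← diagonal_smul]
    simp only [Pi.smul_def, smul_eq_mul, Complex.ofReal_mul]
  have hpos : ∀ᶠ s : ℝ in nhds 0, ∀ k, 0 < s * d k + 1 := by
    refine Filter.eventually_all.2 fun k => ?_
    have hcont : ContinuousAt (fun s : ℝ => s * d k + 1) 0 := by fun_prop
    exact Filter.Tendsto.eventually_const_lt (by simp) hcont
  filter_upwards [hpos] with s hs
  rw [hline]
  exact posDef_conjDiag_iff.2 hs

variable {ι m : Type*} [Fintype ι] [Fintype m] [LinearOrder m] [LocallyFiniteOrderBot m]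

theorem hasDerivAt_kempfNess_one_add_smul [LocallyFiniteOrderTop m] (V : ι → unitaryGroup m ℂ)
    (c : ι → m → ℝ) (σ : ℝ) (Z : Matrix m m ℂ) :
    HasDerivAt (fun s : ℝ => kempfNess (fun i => V i) c σ (1 + (s : ℂ) • Z))
      (Z * (∑ i, conjDiag (V i) (tailSum (c i)) - (σ : ℂ) • 1)).trace.re 0 := by
  have hline : ∀ i (s : ℝ), (V i : Matrix m m ℂ)ᴴ * (1 + (s : ℂ) • Z) * V i =
      1 + (s : ℂ) • ((V i : Matrix m m ℂ)ᴴ * Z * V i) := fun i s => by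
    rw [mul_add, add_mul, mul_one, mul_smul_comm, smul_mul_assoc]
    exact congrArg (· + _) (mem_unitaryGroup_iff'.1 (V i).2)
  have htrace : ∀ i, ∑ l, ((((V i : Matrix m m ℂ)ᴴ * Z * V i) l l).re * tailSum (c i) l) =
      (Z * conjDiag (V i) (tailSum (c i))).trace.re := fun i => by
    rw [conjDiag_eq_mul, ← mul_assoc, ← mul_assoc, trace_mul_comm, ← mul_assoc, ← mul_assoc,
      Matrix.trace, Complex.re_sum]
    refine Finset.sum_congr rfl fun l _ => ?_
    rw [diag_apply, mul_diagonal, Complex.re_mul_ofReal]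
  have hderiv := (HasDerivAt.fun_sum fun i (_ : i ∈ Finset.univ) =>
    hasDerivAt_logPower_one_add_smul (c i) ((V i : Matrix m m ℂ)ᴴ * Z * V i)).sub
      ((hasDerivAt_log_norm_det_one_add_smul Z).const_mul σ)
  simp only [kempfNess, hline]
  refine hderiv.congr_deriv ?_
  rw [mul_sub, Finset.mul_sum, trace_sub, trace_sum, Complex.sub_re, Complex.re_sum,
    Finset.sum_congr rfl fun i _ => htrace i, mul_smul_comm, mul_one, trace_smul, smul_eq_mul,
    Complex.re_ofReal_mul]

/-- Replacing a flag by the orthonormal frame that Gram–Schmidt extracts from it changes the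
Kempf–Ness function by a constant only. -/
theorem exists_forall_posDef_kempfNess_conjTranspose_mul_mul_eq {B : ι → Matrix m m ℂ}
    (hB : ∀ i, IsUnit (B i)) {g : Matrix m m ℂ} (hg : IsUnit g) (c : ι → m → ℝ) (σ : ℝ) :
    ∃ (V : ι → unitaryGroup m ℂ) (κ : ℝ), ∀ Y : Matrix m m ℂ, Y.PosDef →
      kempfNess B c σ (gᴴ * Y * g) = kempfNess (fun i => V i) c σ Y + κ := by
  have hunit : ∀ i, IsUnit (g * B i) := fun i => hg.mul (hB i)
  choose S hS hSunit hSone using fun i =>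
    exists_blockTriangular_conjTranspose_mul_self_eq_one Function.injective_id
      ((nonsing_inv_mul _ ((isUnit_iff_isUnit_det _).1 (hunit i))))
  let V (i : ι) : unitaryGroup m ℂ := ⟨g * B i * S i, mem_unitaryGroup_iff'.2 (hSone i)⟩
  refine ⟨V, -(2 * ∑ i, logPower (c i) (S i)) - σ * (2 * Real.log ‖g.det‖), fun Y hY => ?_⟩
  have hflag : ∀ i, logPower (c i) ((V i : Matrix m m ℂ)ᴴ * Y * V i) =
      logPower (c i) ((B i)ᴴ * (gᴴ * Y * g) * B i) + 2 * logPower (c i) (S i) := fun i => by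
    have hpos : ((g * B i)ᴴ * Y * (g * B i)).PosDef :=
      hY.conjTranspose_mul_mul_same (mulVec_injective_of_isUnit (hunit i))
    have h := logPower_conjTranspose_mul_mul (c i) (hS i) (hSunit i)
      (det_leadingBlock_ne_zero_of_posDef hpos)
    simpa only [V, conjTranspose_mul, mul_assoc] using h
  have hdet : Real.log ‖(gᴴ * Y * g).det‖ = Real.log ‖Y.det‖ + 2 * Real.log ‖g.det‖ := by
    have hg0 : g.det ≠ 0 := ((isUnit_iff_isUnit_det _).1 hg).ne_zero
    rw [det_mul, det_mul, det_conjTranspose, norm_mul, norm_mul, norm_star,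
      Real.log_mul (by simp [hg0, hY.det_pos.ne']) (by simpa),
      Real.log_mul (by simpa) (by simp [hY.det_pos.ne'])]
    ring
  rw [kempfNess, kempfNess, hdet, Finset.sum_congr rfl fun i _ => hflag i, Finset.sum_add_distrib,
    ← Finset.mul_sum]
  ring

theorem sum_conjDiag_add_smul_eq_of_forall_posDef_le [LocallyFiniteOrderTop m]
    {V : ι → unitaryGroup m ℂ} {c : ι → m → ℝ} {σ ε : ℝ} {P : Matrix m m ℂ} (hP : P.IsHermitian)
    (hmin : ∀ Y : Matrix m m ℂ, Y.PosDef → kempfNess (fun i => V i) c σ 1 + ε * P.trace.re ≤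
      kempfNess (fun i => V i) c σ Y + ε * (Y * P).trace.re) :
    ∑ i, conjDiag (V i) (tailSum (c i)) + (ε : ℂ) • P = (σ : ℂ) • 1 := by
  let D := ∑ i, conjDiag (V i) (tailSum (c i)) - (σ : ℂ) • 1
  let Z := D + (ε : ℂ) • P
  have hreal : ∀ x : ℝ, IsSelfAdjoint (x : ℂ) := fun x => Complex.conj_ofReal x
  have hZ : Zᴴ = Z :=
    ((isSelfAdjoint_sum _ fun i _ => conjDiag_isHermitian (V i) _).sub
      ((hreal σ).smul (.one _))).add ((hreal ε).smul hP)
  have hlocal : IsLocalMin (fun s : ℝ => kempfNess (fun i => V i) c σ (1 + (s : ℂ) • Z) +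
      ε * ((1 + (s : ℂ) • Z) * P).trace.re) 0 := by
    filter_upwards [eventually_posDef_one_add_smul hZ] with s hs
    simpa using hmin _ hs
  have hlinear : HasDerivAt (fun s : ℝ => ((1 + (s : ℂ) • Z) * P).trace.re) (Z * P).trace.re 0 := by
    have hline : (fun s : ℝ => ((1 + (s : ℂ) • Z) * P).trace.re) =
        fun s => P.trace.re + s * (Z * P).trace.re := by
      funext s
      rw [add_mul, one_mul, smul_mul_assoc, trace_add, trace_smul, smul_eq_mul, Complex.add_re,
        Complex.re_ofReal_mul]
    rw [hline]
    exact (hasDerivAt_mul_const _).const_add _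
  have hzero := hlocal.hasDerivAt_eq_zero
    ((hasDerivAt_kempfNess_one_add_smul V c σ Z).add (hlinear.const_mul ε))
  have hsq : ‖Z‖ ^ 2 = 0 := by
    rw [← hzero, frobenius_norm_sq_eq_re_trace, hZ]
    nth_rw 2 [show Z = D + (ε : ℂ) • P from rfl]
    rw [mul_add, mul_smul_comm, trace_add, trace_smul, smul_eq_mul, Complex.add_re,
      Complex.re_ofReal_mul]
  have hZzero : D + (ε : ℂ) • P = 0 := norm_eq_zero.1 (pow_eq_zero_iff two_ne_zero |>.1 hsq)
  rwa [sub_add_eq_add_sub, sub_eq_zero] at hZzero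

theorem exists_sum_conjDiag_eq_of_forall_posDef_le [LocallyFiniteOrderTop m]
    {B : ι → Matrix m m ℂ} (hB : ∀ i, IsUnit (B i)) {c : ι → m → ℝ} {τ ε : ℝ} {g : Matrix m m ℂ}
    (hg : IsUnit g)
    (hmin : ∀ X : Matrix m m ℂ, X.PosDef →
      kempfNess B c τ (gᴴ * g) + ε * logDetPotential (gᴴ * g) ≤
        kempfNess B c τ X + ε * logDetPotential X) :
    ∃ V : ι → unitaryGroup m ℂ,
      ∑ i, conjDiag (V i) (tailSum (c i)) + (ε : ℂ) • (g * gᴴ) = ((τ + ε : ℝ) : ℂ) • 1 := by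
  obtain ⟨V, κ, hκ⟩ := exists_forall_posDef_kempfNess_conjTranspose_mul_mul_eq hB hg c (τ + ε)
  have hreg : ∀ Y : Matrix m m ℂ, Y.PosDef →
      kempfNess B c τ (gᴴ * Y * g) + ε * logDetPotential (gᴴ * Y * g) =
        kempfNess (fun i => V i) c (τ + ε) Y + ε * (Y * (g * gᴴ)).trace.re + κ := fun Y hY => by
    have h := hκ Y hY
    rw [← mul_assoc Y, trace_mul_comm, ← mul_assoc gᴴ]
    simp only [kempfNess, logDetPotential] at h ⊢
    linarith
  refine ⟨V, sum_conjDiag_add_smul_eq_of_forall_posDef_le (isHermitian_mul_conjTranspose_self g)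
    fun Y hY => ?_⟩
  have hle := hmin (gᴴ * Y * g) (hY.conjTranspose_mul_mul_same (mulVec_injective_of_isUnit hg))
  have hone := hreg 1 .one
  rw [mul_one, one_mul] at hone
  rw [hone, hreg Y hY] at hle
  linarith

end CriticalPoint

section BalancedFrames

open scoped Matrix.Norms.Frobenius

variable {ι : Type*} [Fintype ι] {n : ℕ} {B : ι → Matrix (Fin n) (Fin n) ℂ} {τ : ℝ}

theorem exists_norm_sum_conjDiag_tailSum_sub_le {c : ι → Fin n → ℝ} (hB : ∀ i, IsUnit (B i))
    (hc : ∀ i, 0 ≤ c i) (hss : IsSlopeSemistable B (fun i => tailSum (c i)) τ) {ε : ℝ}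
    (hε : 0 < ε) :
    ∃ V : ι → unitaryGroup (Fin n) ℂ, ‖∑ i, conjDiag (V i) (tailSum (c i)) - (τ : ℂ) • 1‖ ≤
      ε * (‖(1 : Matrix (Fin n) (Fin n) ℂ)‖ + n) := by
  obtain ⟨K, hK⟩ := exists_forall_posDef_le_kempfNess hB hc hss
  obtain ⟨g, hg, hmin⟩ := exists_forall_posDef_add_logDetPotential_le
    (fun X hX => continuousAt_kempfNess hB c τ hX) hK hε
  obtain ⟨V, hV⟩ := exists_sum_conjDiag_eq_of_forall_posDef_le hB hg hmin
  have hnorm : ‖g‖ ^ 2 = n := by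
    have htrace := congrArg (fun X => X.trace.re) hV
    simp only [trace_add, trace_sum, trace_conjDiag, trace_smul, trace_one, smul_eq_mul,
      Complex.add_re, Complex.re_sum, Complex.ofReal_re, Complex.re_ofReal_mul, Complex.natCast_re,
      trace_mul_comm g, ← frobenius_norm_sq_eq_re_trace, hss.1] at htrace
    rw [Fintype.card_fin, add_mul, add_right_inj] at htrace
    exact mul_left_cancel₀ hε.ne' htrace
  refine ⟨V, ?_⟩
  have hdiff : ∑ i, conjDiag (V i) (tailSum (c i)) - (τ : ℂ) • 1 = (ε : ℂ) • (1 - g * gᴴ) := by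
    rw [eq_sub_of_add_eq hV, Complex.ofReal_add, add_smul, smul_sub]
    abel
  calc
    ‖∑ i, conjDiag (V i) (tailSum (c i)) - (τ : ℂ) • 1‖ = ε * ‖1 - g * gᴴ‖ := by
      rw [hdiff, norm_smul, Complex.norm_real, Real.norm_of_nonneg hε.le]
    _ ≤ ε * (‖(1 : Matrix (Fin n) (Fin n) ℂ)‖ + ‖g‖ * ‖gᴴ‖) := by
      gcongr
      exact (norm_sub_le _ _).trans (add_le_add_right (frobenius_norm_mul _ _) _)
    _ = ε * (‖(1 : Matrix (Fin n) (Fin n) ℂ)‖ + n) := by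
      rw [frobenius_norm_conjTranspose, ← sq, hnorm]

theorem isCompact_range_sum_conjDiag {m : Type*} [Fintype m] [DecidableEq m] (ν : ι → m → ℝ) :
    IsCompact (Set.range fun V : ι → unitaryGroup m ℂ => ∑ i, conjDiag (V i) (ν i)) :=
  isCompact_range <| continuous_finsetSum _ fun i _ => by
    simp only [conjDiag_eq_mul]
    fun_prop

theorem exists_sum_conjDiag_eq_smul_one {ν : ι → Fin n → ℝ} (hB : ∀ i, IsUnit (B i))
    (hν : ∀ i, Antitone (ν i)) (hν0 : ∀ i, 0 ≤ ν i) (hss : IsSlopeSemistable B ν τ) :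
    ∃ V : ι → unitaryGroup (Fin n) ℂ, ∑ i, conjDiag (V i) (ν i) = (τ : ℂ) • 1 := by
  choose c hc hcν using fun i => exists_nonneg_tailSum_eq (hν i) (hν0 i)
  obtain rfl : (fun i => tailSum (c i)) = ν := funext hcν
  refine (isCompact_range_sum_conjDiag _).isClosed.closure_subset_iff.2 subset_rfl
    (Metric.mem_closure_iff.2 fun δ hδ => ?_)
  have hK : 0 < ‖(1 : Matrix (Fin n) (Fin n) ℂ)‖ + n + 1 := by positivity
  obtain ⟨V, hV⟩ := exists_norm_sum_conjDiag_tailSum_sub_le hB hc hss (div_pos hδ hK)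
  refine ⟨_, ⟨V, rfl⟩, ?_⟩
  rw [dist_comm, dist_eq_norm]
  refine hV.trans_lt ?_
  rw [div_mul_eq_mul_div, div_lt_iff₀ hK]
  exact mul_lt_mul_of_pos_left (lt_add_one _) hδ

end BalancedFrames

section SymmetricHorn

variable {ι : Type*} [Fintype ι] {n : ℕ}

theorem IsSlopeSemistable.add_const {m : Type*} [Fintype m] [LinearOrder m]
    [LocallyFiniteOrderBot m] {B : ι → Matrix m m ℂ} {ν : ι → m → ℝ} {τ : ℝ}
    (hss : IsSlopeSemistable B ν τ) (t : ℝ) :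
    IsSlopeSemistable B (fun i k => ν i k + t) (τ + Fintype.card ι * t) := by
  refine ⟨?_, fun j a ha => ?_⟩
  · simp only [Finset.sum_add_distrib, hss.1, Finset.sum_const, Finset.card_univ, nsmul_eq_mul]
    ring
  · have hle := hss.2 j a ha
    simp only [Finset.sum_add_distrib, Finset.sum_const, Finset.card_univ, nsmul_eq_mul,
      Fintype.card_coe]
    linarith

theorem exists_sum_conjDiag_eq_zero_iff {ν : ι → Fin n → ℝ} (hν : ∀ i, Antitone (ν i)) :
    (∃ V : ι → unitaryGroup (Fin n) ℂ, ∑ i, conjDiag (V i) (ν i) = 0) ↔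
      ∑ i, ∑ k, ν i k = 0 ∧ ∀ (j : Fin n) (a : ι → Finset.Iic j ↪ Fin n),
        (∀ G : ι → Matrix (Fin n) (Fin n) ℂ, SchubertIntersects G a) →
          ∑ i, ∑ l, ν i (a i l) ≤ 0 := by
  constructor
  · rintro ⟨V, hV⟩
    refine ⟨?_, fun j a ha => sum_apply_nonpos_of_sum_conjDiag_eq_zero hν hV (ha _)⟩
    have htrace := congrArg trace hV
    simp only [trace_sum, trace_conjDiag, trace_zero] at htrace
    exact_mod_cast htrace
  · rintro ⟨hsum, hineq⟩
    obtain ⟨G, hG, hgeneric⟩ := exists_generic_schubertIntersects (ι := ι) (m := Fin n)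
    have hss : IsSlopeSemistable (fun i => (G i)⁻¹) ν 0 := by
      refine ⟨by rw [hsum, zero_mul], fun j a ha => ?_⟩
      rw [zero_mul]
      refine hineq j a (hgeneric a ?_)
      simpa only [nonsing_inv_nonsing_inv _ ((isUnit_iff_isUnit_det _).1 (hG _))] using ha
    let t := ∑ i, ∑ k, |ν i k|
    have ht : ∀ i, 0 ≤ fun k => ν i k + t := fun i k => by
      have hle : |ν i k| ≤ t :=
        (Finset.single_le_sum (f := fun k => |ν i k|) (fun k _ => abs_nonneg _)
          (Finset.mem_univ k)).trans (Finset.single_le_sum (f := fun i => ∑ k, |ν i k|)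
            (fun i _ => Finset.sum_nonneg fun k _ => abs_nonneg _) (Finset.mem_univ i))
      exact neg_le_iff_add_nonneg.1 ((neg_le_neg hle).trans (neg_abs_le _))
    obtain ⟨V, hV⟩ := exists_sum_conjDiag_eq_smul_one
      (fun i => isUnit_nonsing_inv_iff.2 (hG i)) (fun i => (hν i).add_const t) ht (hss.add_const t)
    refine ⟨V, ?_⟩
    simp only [conjDiag_add_const, Finset.sum_add_distrib, Finset.sum_const, Finset.card_univ,
      zero_add, Complex.ofReal_mul, Complex.ofReal_natCast, ← Nat.cast_smul_eq_nsmul ℂ,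
      smul_smul] at hV
    exact add_eq_right.1 hV

end SymmetricHorn

section SymmetrizedSpectra

variable {ι : Type*} {n : ℕ} {μ : Fin n → ℝ} {lam : ι → Fin n → ℝ}

/-- The spectra, in nonincreasing order, of the summands of `A - ∑ i, X i`, where `A` has spectrum
`μ` and `X i` has spectrum `lam i`. -/
def symmetrizedSpectra (μ : Fin n → ℝ) (lam : ι → Fin n → ℝ) : Option ι → Fin n → ℝ
  | none => μ
  | some i => -(lam i ∘ Fin.revPerm)

theorem antitone_symmetrizedSpectra (hμ : Antitone μ) (hlam : ∀ i, Antitone (lam i)) :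
    ∀ i, Antitone (symmetrizedSpectra μ lam i)
  | none => hμ
  | some i => fun _ _ h => neg_le_neg (hlam i (Fin.rev_le_rev.2 h))

theorem sum_sum_symmetrizedSpectra [Fintype ι] (μ : Fin n → ℝ) (lam : ι → Fin n → ℝ) :
    ∑ i, ∑ k, symmetrizedSpectra μ lam i k = ∑ k, μ k - ∑ i, ∑ k, lam i k := by
  simp only [Fintype.sum_option, symmetrizedSpectra, Pi.neg_apply, Function.comp_apply,
    Finset.sum_neg_distrib, Equiv.sum_comp Fin.revPerm (lam _), sub_eq_add_neg]

theorem sum_sum_symmetrizedSpectra_apply [Fintype ι] {β : Type*} [Fintype β] (μ : Fin n → ℝ)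
    (lam : ι → Fin n → ℝ) (a : Option ι → β ↪ Fin n) :
    ∑ i, ∑ l, symmetrizedSpectra μ lam i (a i l) =
      ∑ k ∈ Finset.univ.map (a none), μ k -
        ∑ i, ∑ j ∈ Finset.univ.map ((a (some i)).trans Fin.revPerm.toEmbedding), lam i j := by
  simp only [Fintype.sum_option, symmetrizedSpectra, Pi.neg_apply, Function.comp_apply,
    Finset.sum_neg_distrib, Finset.sum_map, Function.Embedding.trans_apply,
    Equiv.coe_toEmbedding, sub_eq_add_neg]

theorem exists_conjDiag_some_symmetrizedSpectra_eq_neg (μ : Fin n → ℝ) (lam : ι → Fin n → ℝ)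
    (i : ι) (U : unitaryGroup (Fin n) ℂ) :
    ∃ W, conjDiag W (symmetrizedSpectra μ lam (some i)) = -conjDiag U (lam i) := by
  obtain ⟨W, hW⟩ := conjDiag_comp_perm U (lam i) Fin.revPerm
  exact ⟨W, by rw [symmetrizedSpectra, conjDiag_neg, hW]⟩

theorem exists_neg_conjDiag_some_symmetrizedSpectra_eq (μ : Fin n → ℝ) (lam : ι → Fin n → ℝ)
    (i : ι) (W : unitaryGroup (Fin n) ℂ) :
    ∃ U, conjDiag U (lam i) = -conjDiag W (symmetrizedSpectra μ lam (some i)) := by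
  obtain ⟨U, hU⟩ := conjDiag_comp_perm W (lam i ∘ Fin.revPerm) Fin.revPerm.symm
  refine ⟨U, ?_⟩
  rw [symmetrizedSpectra, conjDiag_neg, neg_neg, ← hU, Function.comp_assoc,
    Equiv.self_comp_symm, Function.comp_id]

theorem exists_conjDiag_eq_sum_iff [Fintype ι] (V : unitaryGroup (Fin n) ℂ) :
    (∃ U : ι → unitaryGroup (Fin n) ℂ, conjDiag V μ = ∑ i, conjDiag (U i) (lam i)) ↔
      ∃ W : Option ι → unitaryGroup (Fin n) ℂ,
        ∑ i, conjDiag (W i) (symmetrizedSpectra μ lam i) = 0 := by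
  constructor
  · rintro ⟨U, hU⟩
    choose W hW using fun i => exists_conjDiag_some_symmetrizedSpectra_eq_neg μ lam i (U i)
    refine ⟨fun i => i.elim V W, ?_⟩
    simp only [Fintype.sum_option, Option.elim_none, Option.elim_some, hW, Finset.sum_neg_distrib]
    rw [symmetrizedSpectra, hU, add_neg_cancel]
  · rintro ⟨W, hW⟩
    choose U hU using fun i =>
      exists_neg_conjDiag_some_symmetrizedSpectra_eq μ lam i (V * (W none)⁻¹ * W (some i))
    refine ⟨U, ?_⟩
    have hV := congrArg (Unitary.conjStarAlgAut ℂ _ (V * (W none)⁻¹)) hW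
    rw [map_sum, map_zero] at hV
    simp only [conjStarAlgAut_conjDiag, Fintype.sum_option, inv_mul_cancel_right] at hV
    simp only [hU, Finset.sum_neg_distrib]
    exact eq_neg_of_add_eq_zero_left hV

theorem exists_isHermitian_hasSpectrum_eq_sum_iff [Fintype ι] {A : Matrix (Fin n) (Fin n) ℂ}
    (hA : A.IsHermitian) (hspec : HasSpectrum A μ) :
    (∃ X : ι → Matrix (Fin n) (Fin n) ℂ,
        (∀ i, (X i).IsHermitian) ∧ (∀ i, HasSpectrum (X i) (lam i)) ∧ A = ∑ i, X i) ↔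
      ∃ W : Option ι → unitaryGroup (Fin n) ℂ,
        ∑ i, conjDiag (W i) (symmetrizedSpectra μ lam i) = 0 := by
  obtain ⟨V, rfl⟩ := isHermitian_and_hasSpectrum_iff.1 ⟨hA, hspec⟩
  rw [← exists_conjDiag_eq_sum_iff V]
  constructor
  · rintro ⟨X, hX, hXspec, hsum⟩
    choose U hU using fun i => isHermitian_and_hasSpectrum_iff.1 ⟨hX i, hXspec i⟩
    exact ⟨U, by simp only [hU, hsum]⟩
  · rintro ⟨U, hU⟩
    exact ⟨_, fun i => conjDiag_isHermitian (U i) _, fun i => charpoly_conjDiag (U i) _, hU⟩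

end SymmetrizedSpectra

/-- Horn's theorem: for each `n, N ≥ 1` there is a finite list of index sets `K_l ⊆ {1,…,n}`
and `J_{il} ⊆ {1,…,n}` such that an `n × n` Hermitian matrix `A` is a sum of `N` Hermitian
matrices with given nonincreasing spectra `λ¹, …, λᴺ` iff the trace condition and all the
inequalities `∑_{k ∈ K_l} Spec(A)_k ≤ ∑_i ∑_{j ∈ J_{il}} λⁱ_j` hold. -/
theorem horn_sufficient_inequalities (n N : ℕ) (hn : 0 < n) (hN : 0 < N) :
    ∃ (m : ℕ) (K : Fin m → Finset (Fin n)) (J : Fin m → Fin N → Finset (Fin n)),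
      ∀ (A : Matrix (Fin n) (Fin n) ℂ), A.IsHermitian →
      ∀ μ : Fin n → ℝ, Antitone μ → HasSpectrum A μ →
      ∀ lam : Fin N → Fin n → ℝ, (∀ i, Antitone (lam i)) →
      ((∃ X : Fin N → Matrix (Fin n) (Fin n) ℂ,
          (∀ i, (X i).IsHermitian) ∧ (∀ i, HasSpectrum (X i) (lam i)) ∧ A = ∑ i, X i) ↔
        (A.trace = ((∑ i, ∑ j, lam i j : ℝ) : ℂ) ∧
          ∀ l : Fin m, (∑ k ∈ K l, μ k) ≤ ∑ i, ∑ j ∈ J l i, lam i j)) := by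
  let L := Σ k : Fin n, {a : Option (Fin N) → Finset.Iic k ↪ Fin n //
    ∀ G : Option (Fin N) → Matrix (Fin n) (Fin n) ℂ, SchubertIntersects G a}
  obtain ⟨m, ⟨e⟩⟩ := Finite.exists_equiv_fin L
  refine ⟨m, fun l => Finset.univ.map ((e.symm l).2.1 none), fun l i =>
    Finset.univ.map (((e.symm l).2.1 (some i)).trans Fin.revPerm.toEmbedding), ?_⟩
  intro A hA μ hμ hspec lam hlam
  have htrace : A.trace = ((∑ k, μ k : ℝ) : ℂ) := by
    obtain ⟨V, rfl⟩ := isHermitian_and_hasSpectrum_iff.1 ⟨hA, hspec⟩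
    exact trace_conjDiag V μ
  rw [exists_isHermitian_hasSpectrum_eq_sum_iff hA hspec,
    exists_sum_conjDiag_eq_zero_iff (antitone_symmetrizedSpectra hμ hlam),
    sum_sum_symmetrizedSpectra, sub_eq_zero, htrace, Complex.ofReal_inj]
  simp only [sum_sum_symmetrizedSpectra_apply, sub_nonpos]
  refine and_congr_right fun _ => ⟨fun h l => h _ _ (e.symm l).2.2, fun h k a ha => ?_⟩
  have hineq := h (e ⟨k, a, ha⟩)
  rwa [e.symm_apply_apply] at hineq
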